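/- arXiv:2211.11023 — 2 statements merged into one kernel-verified Lean document; each statement's English description precedes it below -/
import Mathlib

section
/- For every A ≥ 1 there exist constants c, C > 0 and an integer N such that for all integers n ≥ N and all integers m with 2 ≤ m ≤ n and (log n)/A ≤ m ≤ A·log n, writing u = n/m, one has c·u ≤ log p_{n,m} − u·(1 − log n) ≤ C·u. -/
open Real

noncomputable section

/-- Predicate characterizing the Dickman function `ρ : [0,∞) → (0,∞)`:
continuous on `[0,∞)`, positive, equal to `1` on `[0,1]`, and satisfying the
delay differential equation `t·ρ'(t) + ρ(t-1) = 0` for `t > 1`. -/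
def IsDickman (ρ : ℝ → ℝ) : Prop :=
  ContinuousOn ρ (Set.Ici 0) ∧
  (∀ t : ℝ, 0 ≤ t → 0 < ρ t) ∧
  (∀ t ∈ Set.Icc (0:ℝ) 1, ρ t = 1) ∧
  (∀ t : ℝ, 1 < t → HasDerivAt ρ (-(ρ (t - 1)) / t) t)

/-- `ξ(u)`: for `u > 1`, the unique positive solution of `e^ξ = 1 + u·ξ`; otherwise `0`. -/
def xi (u : ℝ) : ℝ :=
  open Classical in
  if h : ∃ x : ℝ, 0 < x ∧ Real.exp x = 1 + u * x then h.choose else 0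

/-- `p_{n,m}`: probability that a uniformly random permutation of `{1,…,n}` is `m`-friable,
i.e. has no cycle of length greater than `m`. -/
def permProb (n m : ℕ) : ℝ :=
  (Nat.card {σ : Equiv.Perm (Fin n) // ∀ c ∈ σ.cycleType, c ≤ m} : ℝ) /
    (Nat.factorial n : ℝ)

/-- `p_{n,m,q}`: proportion of monic polynomials of degree `n` over a finite field `F`
(of cardinality `q`) that are `m`-friable, i.e. all of whose monic irreducible factors
have degree at most `m`. -/
def polyProb (F : Type) [Field F] [Fintype F] (n m : ℕ) : ℝ :=
  (Nat.card {f : Polynomial F // f.Monic ∧ f.natDegree = n ∧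
      ∀ p : Polynomial F, p.Monic → Irreducible p → p ∣ f → p.natDegree ≤ m} : ℝ) /
    (Fintype.card F : ℝ) ^ n

/-- `F_q(z) = ∏_{deg P ≤ m} (1 - (z/q)^{deg P})⁻¹`, the product over monic irreducible
polynomials `P` over `F` of degree at most `m`. -/
def FqFun (F : Type) [Field F] [Fintype F] (m : ℕ) (z : ℝ) : ℝ :=
  ∏ᶠ p ∈ {p : Polynomial F | p.Monic ∧ Irreducible p ∧ p.natDegree ≤ m},
    (1 - (z / (Fintype.card F : ℝ)) ^ p.natDegree)⁻¹

/-- `G_q(z) = F_q(z) · exp(-∑_{i=1}^m z^i/i)`. -/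
def Gq (F : Type) [Field F] [Fintype F] (m : ℕ) (z : ℝ) : ℝ :=
  FqFun F m z * Real.exp (-(∑ i ∈ Finset.Icc 1 m, z ^ i / (i : ℝ)))

/-- The coefficients `d_{m,i}`. -/
def dcoef (m i : ℕ) : ℝ :=
  if i = m then -(1 / (m : ℝ)) * ∑ j ∈ Finset.Icc 2 m, (1 : ℝ) / (j : ℝ)
  else Real.Gamma ((i : ℝ) + (i : ℝ) / (m : ℝ)) /
    (((m : ℝ) - (i : ℝ)) * (Nat.factorial i : ℝ) * Real.Gamma (1 + (i : ℝ) / (m : ℝ)))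

/-- `T(s) = ∫₀^s ((e^t - 1)/t)·((t/m)/(1 - e^{-t/m}) - 1) dt`, integrand extended by `0` at `t = 0`. -/
def Tfun (m : ℕ) (s : ℝ) : ℝ :=
  ∫ t in (0:ℝ)..s,
    if t = 0 then 0 else
      ((Real.exp t - 1) / t) * ((t / (m : ℝ)) / (1 - Real.exp (-t / (m : ℝ))) - 1)

end
open scoped Nat in
theorem aux_ub (n m : ℕ) (hm : 1 ≤ m) (z : ℝ) (hz : 0 < z) :
    permProb n m * z ^ n ≤ Real.exp (∑ i ∈ Finset.Icc 1 m, z ^ i / (i : ℝ)) := by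
  classical
  set S : Finset (Equiv.Perm (Fin n)) := Finset.univ.filter (fun σ => ∀ c ∈ σ.cycleType, c ≤ m)
    with hS
  have hcard : (Nat.card {σ : Equiv.Perm (Fin n) // ∀ c ∈ σ.cycleType, c ≤ m}) = S.card := by
    rw [Nat.card_eq_fintype_card, Fintype.card_subtype]
  set T := S.image Equiv.Perm.cycleType with hT
  have hT1 : ∀ l ∈ T, l.sum ≤ n ∧ (∀ a ∈ l, 2 ≤ a) ∧ (∀ a ∈ l, a ≤ m) := by
    intro l hl
    obtain ⟨σ, hσ, rfl⟩ := Finset.mem_image.1 hl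
    refine ⟨?_, fun a ha => Equiv.Perm.two_le_of_mem_cycleType ha, (Finset.mem_filter.1 hσ).2⟩
    simpa using Equiv.Perm.sum_cycleType_le σ
  let ext : Multiset ℕ → Multiset ℕ := fun l => l + Multiset.replicate (n - l.sum) 1
  let ph : Multiset ℕ → (Fin m → ℕ) := fun l i => (ext l).count (i.1 + 1)
  let w : (Fin m → ℕ) → ℝ := fun x => ∏ i, (z ^ (i.1+1) / ((i.1+1 : ℕ) : ℝ)) ^ (x i) / ((x i)! : ℝ)
  have prodIcc : ∀ {M : Type} [CommMonoid M] (g : ℕ → M),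
      ∏ i : Fin m, g (i.1 + 1) = ∏ i ∈ Finset.Icc 1 m, g i := by
    intro M _ g
    rw [Fin.prod_univ_eq_prod_range (fun i => g (i+1)) m, Finset.range_eq_Ico,
      Finset.prod_Ico_add' g 0 m 1]
    rfl
  have key : ∀ l ∈ T, ((S.filter (fun σ => σ.cycleType = l)).card : ℝ) / (n ! : ℝ) * z ^ n
      ≤ w (ph l) := by
    intro l hl
    obtain ⟨h1, h2, h3⟩ := hT1 l hl
    have hc := Equiv.Perm.card_of_cycleType_mul_eq (Fin n) l
    rw [if_pos ⟨by simpa using h1, h2⟩, Fintype.card_fin] at hc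
    have hle : (S.filter (fun σ => σ.cycleType = l)).card ≤
        (Finset.univ.filter (fun σ : Equiv.Perm (Fin n) => σ.cycleType = l)).card :=
      Finset.card_le_card (Finset.filter_subset_filter _ (Finset.subset_univ _))
    have hsub : (ext l).toFinset ⊆ Finset.Icc 1 m := by
      intro a ha
      simp only [ext, Multiset.mem_toFinset, Multiset.mem_add] at ha
      rcases ha with ha | ha
      · have := h2 a ha; have := h3 a ha; simp; omega
      · have := Multiset.eq_of_mem_replicate ha; simp; omega
    have hprod : (ext l).prod = l.prod := by simp [ext]
    have hsum : (ext l).sum = n := by simp [ext]; omega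
    have hl1 : l.count 1 = 0 := Multiset.count_eq_zero.2 (fun h => by have := h2 1 h; omega)
    have hfac : ∏ i ∈ Finset.Icc 1 m, ((ext l).count i)! =
        (n - l.sum)! * ∏ i ∈ l.toFinset, (l.count i)! := by
      rw [← Finset.mul_prod_erase _ _ (show 1 ∈ Finset.Icc 1 m by simp [hm])]
      congr 1
      · simp [ext, hl1]
      · symm
        have : ∀ i ∈ (Finset.Icc 1 m).erase 1, ((ext l).count i)! = (l.count i)! := by
          intro i hi
          have : (1:ℕ) ≠ i := fun h => by simp [← h] at hi
          simp [ext, Multiset.count_replicate, this]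
        rw [Finset.prod_congr rfl this]
        refine Finset.prod_subset ?_ ?_
        · intro a ha
          have ha := Multiset.mem_toFinset.1 ha
          have := h2 a ha; have := h3 a ha; simp; omega
        · intro a _ ha
          rw [Multiset.mem_toFinset] at ha
          simp [Multiset.count_eq_zero.2 ha]
    have hD : (n - l.sum)! * l.prod * (∏ i ∈ l.toFinset, (l.count i)!) =
        ∏ i ∈ Finset.Icc 1 m, (i ^ (ext l).count i * ((ext l).count i)!) := by
      rw [Finset.prod_mul_distrib, hfac, ← Finset.prod_multiset_count_of_subset _ _ hsub, hprod]
      ring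
    have hz' : z ^ n = ∏ i ∈ Finset.Icc 1 m, (z ^ i) ^ (ext l).count i := by
      have : n = ∑ i ∈ Finset.Icc 1 m, (ext l).count i * i := by
        conv_lhs => rw [← hsum]
        rw [Finset.sum_multiset_count_of_subset _ _ hsub]
        simp
      conv_lhs => rw [this]
      rw [← Finset.prod_pow_eq_pow_sum]
      refine Finset.prod_congr rfl fun i _ => ?_
      rw [← pow_mul, mul_comm]
    have hw : w (ph l) = z ^ n / ((∏ i ∈ Finset.Icc 1 m, (i ^ (ext l).count i * ((ext l).count i)!) : ℕ) : ℝ) := by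
      simp only [w, ph]
      rw [prodIcc (fun i => (z ^ i / ((i : ℕ) : ℝ)) ^ ((ext l).count i) / (((ext l).count i)! : ℝ)), hz']
      push_cast
      rw [← Finset.prod_div_distrib]
      refine Finset.prod_congr rfl fun i _ => ?_
      rw [div_pow, div_div]
    rw [hw, ← hD]
    set D := (n - l.sum)! * l.prod * (∏ i ∈ l.toFinset, (l.count i)!) with hDdef
    have hDpos : 0 < D := by
      rcases Nat.eq_zero_or_pos D with h | h
      · rw [h, mul_zero] at hc; exact absurd hc.symm (Nat.factorial_ne_zero n)
      · exact h
    have hn0 : (0:ℝ) < n ! := by exact_mod_cast Nat.factorial_pos n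
    have hD0 : (0:ℝ) < D := by exact_mod_cast hDpos
    rw [div_mul_eq_mul_div, div_le_div_iff₀ hn0 hD0]
    have : ((S.filter (fun σ => σ.cycleType = l)).card : ℝ) * D ≤ n ! := by
      rw [← hc]; push_cast
      gcongr
    nlinarith [pow_pos hz n]
  have hinj : Set.InjOn ph T := by
    intro l hl l' hl' h
    obtain ⟨h1, h2, h3⟩ := hT1 l hl
    obtain ⟨h1', h2', h3'⟩ := hT1 l' hl'
    ext a
    by_cases ha : 2 ≤ a ∧ a ≤ m
    · have := congrFun h ⟨a - 1, by omega⟩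
      have h1a : (1:ℕ) ≠ a := by omega
      have h1b : a - 1 + 1 = a := by omega
      have h1c : a - 1 ≠ 0 := by omega
      simpa [ph, ext, h1b, Multiset.count_replicate, h1a, h1c] using this
    · rw [Multiset.count_eq_zero.2 (fun h => ha ⟨h2 a h, h3 a h⟩),
        Multiset.count_eq_zero.2 (fun h => ha ⟨h2' a h, h3' a h⟩)]
  have hmaps : ∀ l ∈ T, ph l ∈ Fintype.piFinset (fun _ : Fin m => Finset.range (n+1)) := by
    intro l hl
    obtain ⟨h1, h2, h3⟩ := hT1 l hl
    rw [Fintype.mem_piFinset]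
    intro i
    rw [Finset.mem_range, Nat.lt_succ_iff]
    have hsum : (ext l).sum = n := by simp [ext]; omega
    have hcd : (ext l).card ≤ (ext l).sum := by
      have := Multiset.card_nsmul_le_sum (s := ext l) (a := 1) (by
        intro x hx
        simp only [ext, Multiset.mem_add] at hx
        rcases hx with hx | hx
        · have := h2 x hx; omega
        · exact (Multiset.eq_of_mem_replicate hx).ge)
      simpa using this
    exact (Multiset.count_le_card _ _).trans (hcd.trans hsum.le)
  have hw0 : ∀ x, 0 ≤ w x := fun x => Finset.prod_nonneg fun i _ => by positivity
  calc permProb n m * z ^ n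
      = ∑ l ∈ T, ((S.filter (fun σ => σ.cycleType = l)).card : ℝ) / (n ! : ℝ) * z ^ n := by
        rw [permProb, hcard, Finset.card_eq_sum_card_image Equiv.Perm.cycleType S]
        push_cast
        rw [Finset.sum_div, Finset.sum_mul]
    _ ≤ ∑ l ∈ T, w (ph l) := Finset.sum_le_sum key
    _ = ∑ x ∈ T.image ph, w x := (Finset.sum_image hinj).symm
    _ ≤ ∑ x ∈ Fintype.piFinset (fun _ : Fin m => Finset.range (n+1)), w x := by
        refine Finset.sum_le_sum_of_subset_of_nonneg ?_ fun x _ _ => hw0 x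
        intro x hx
        obtain ⟨l, hl, rfl⟩ := Finset.mem_image.1 hx
        exact hmaps l hl
    _ = ∏ i : Fin m, ∑ j ∈ Finset.range (n+1), (z ^ (i.1+1) / ((i.1+1 : ℕ) : ℝ)) ^ j / (j ! : ℝ) := by
        rw [Finset.prod_univ_sum]
    _ ≤ ∏ i : Fin m, Real.exp (z ^ (i.1+1) / ((i.1+1 : ℕ) : ℝ)) := by
        refine Finset.prod_le_prod (fun i _ => Finset.sum_nonneg fun j _ => by positivity) ?_
        intro i _
        exact Real.sum_le_exp_of_nonneg (by positivity) _
    _ = Real.exp (∑ i ∈ Finset.Icc 1 m, z ^ i / (i : ℝ)) := by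
        rw [prodIcc (fun i => Real.exp (z ^ i / (i : ℝ))), Real.exp_sum]

open scoped Nat in
theorem aux_lb (n m a b : ℕ) (hm : 3 ≤ m) (h : a * (m - 1) + b * m ≤ n) :
    1 / (((n - (a * (m-1) + b * m))! : ℝ) * ((m : ℝ) ^ a * (m : ℝ) ^ b) * ((a ! : ℝ) * (b ! : ℝ)))
      ≤ permProb n m := by
  classical
  set l : Multiset ℕ := Multiset.replicate a (m-1) + Multiset.replicate b m with hl
  have hsum : l.sum = a * (m-1) + b * m := by simp [hl]
  have hmem : ∀ x ∈ l, x = m - 1 ∨ x = m := by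
    intro x hx
    rw [hl, Multiset.mem_add] at hx
    exact hx.imp Multiset.eq_of_mem_replicate Multiset.eq_of_mem_replicate
  have hc := Equiv.Perm.card_of_cycleType_mul_eq (Fin n) l
  rw [if_pos ⟨by rw [hsum]; simpa using h, fun x hx => by have := hmem x hx; omega⟩,
    Fintype.card_fin, hsum] at hc
  have hprod : l.prod = (m-1)^a * m^b := by simp [hl]
  have hne : m - 1 ≠ m := by omega
  have hfac : ∏ x ∈ l.toFinset, (l.count x)! = a ! * b ! := by
    rw [Finset.prod_subset (s₂ := {m-1, m})]
    · rw [Finset.prod_pair hne]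
      simp [hl, Multiset.count_replicate, hne, hne.symm]
    · intro x hx
      have := hmem x (Multiset.mem_toFinset.1 hx)
      simpa using this
    · intro x _ hx
      rw [Multiset.mem_toFinset] at hx
      simp [Multiset.count_eq_zero.2 hx]
  rw [hprod, hfac] at hc
  have hle : (Finset.univ.filter (fun σ : Equiv.Perm (Fin n) => σ.cycleType = l)).card ≤
      Nat.card {σ : Equiv.Perm (Fin n) // ∀ c ∈ σ.cycleType, c ≤ m} := by
    rw [Nat.card_eq_fintype_card, Fintype.card_subtype]
    refine Finset.card_le_card ?_
    intro σ hσ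
    simp only [Finset.mem_filter, Finset.mem_univ, true_and] at hσ ⊢
    intro c hc'
    have := hmem c (hσ ▸ hc')
    omega
  rw [permProb]
  have hn0 : (0:ℝ) < n ! := by exact_mod_cast Nat.factorial_pos n
  have hm0 : (0:ℝ) < m := by exact_mod_cast (by omega : 0 < m)
  rw [div_le_div_iff₀ (by positivity) hn0, one_mul, ← hc]
  push_cast
  have h1 : ((m - 1 : ℕ) : ℝ) ≤ m := by exact_mod_cast Nat.sub_le _ _
  have hle' : ((Finset.univ.filter (fun σ : Equiv.Perm (Fin n) => σ.cycleType = l)).card : ℝ) ≤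
      (Nat.card {σ : Equiv.Perm (Fin n) // ∀ c ∈ σ.cycleType, c ≤ m} : ℝ) := by
    exact_mod_cast hle
  gcongr

open scoped Nat in
theorem aux_logfac (b : ℕ) : Real.log (b ! : ℝ) ≤ ((b:ℝ) + 1) * Real.log b - b + 1 := by
  induction b with
  | zero => simp
  | succ k ih =>
    rcases Nat.eq_zero_or_pos k with rfl | hk
    · simp
    have hk0 : (0:ℝ) < k := by exact_mod_cast hk
    rw [Nat.factorial_succ]
    push_cast
    rw [Real.log_mul (by positivity) (by positivity)]
    have h := Real.one_sub_inv_le_log_of_pos (show (0:ℝ) < (k+1)/k by positivity)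
    rw [Real.log_div (by positivity) (by positivity), inv_div] at h
    have h2 : 1 ≤ ((k:ℝ)+1) * (Real.log (k+1) - Real.log k) := by
      have : ((k:ℝ)+1) * (1 - k/(k+1)) = 1 := by field_simp; ring
      calc (1:ℝ) = ((k:ℝ)+1) * (1 - k/(k+1)) := this.symm
        _ ≤ _ := mul_le_mul_of_nonneg_left h (by positivity)
    nlinarith

theorem aux_sum (A : ℝ) (hA : 1 ≤ A) : ∃ K : ℝ, 0 < K ∧ ∀ m : ℕ, 1 ≤ m → ∀ z : ℝ,
    Real.exp (1 / A) ≤ z → ∑ i ∈ Finset.Icc 1 m, z ^ i / (i : ℝ) ≤ K * (z ^ m / m) := by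
  set r : ℝ := Real.exp (-(1 / A)) with hr
  have hr0 : 0 < r := Real.exp_pos _
  have hr1 : r < 1 := by
    rw [hr, Real.exp_lt_one_iff]; have : 0 < 1 / A := by positivity
    linarith
  have hs : Summable (fun j : ℕ => ((j:ℝ) + 1) * r ^ j) := by
    have h1 := summable_pow_mul_geometric_of_norm_lt_one 1 (r := r) (by rwa [Real.norm_of_nonneg hr0.le])
    have h0 := summable_geometric_of_lt_one hr0.le hr1
    simpa [add_mul] using h1.add h0
  refine ⟨∑' j : ℕ, ((j:ℝ) + 1) * r ^ j, ?_, ?_⟩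
  · exact hs.tsum_pos (fun j => by positivity) 0 (by simp)
  intro m hm z hz
  have hz0 : 0 < z := (Real.exp_pos _).trans_le hz
  have hm0 : (0:ℝ) < m := by exact_mod_cast hm
  have hrz : 1 ≤ r * z := by
    calc (1:ℝ) = r * Real.exp (1 / A) := by rw [hr, ← Real.exp_add]; simp
      _ ≤ r * z := by gcongr
  calc ∑ i ∈ Finset.Icc 1 m, z ^ i / (i : ℝ)
      ≤ ∑ i ∈ Finset.Icc 1 m, (((m - i : ℕ) : ℝ) + 1) * r ^ (m - i) * (z ^ m / m) := by
        refine Finset.sum_le_sum fun i hi => ?_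
        obtain ⟨h1, h2⟩ := Finset.mem_Icc.1 hi
        obtain ⟨j, rfl⟩ := Nat.exists_eq_add_of_le h2
        have hi0 : (0:ℝ) < i := by exact_mod_cast h1
        have hi1 : (1:ℝ) ≤ i := by exact_mod_cast h1
        have hj0 : (0:ℝ) ≤ j := Nat.cast_nonneg j
        rw [Nat.add_sub_cancel_left]
        have e : ((j:ℝ) + 1) * r ^ j * (z ^ (i + j) / ((i + j : ℕ) : ℝ)) =
          (r * z) ^ j * z ^ i * ((j + 1) / ((i:ℝ) + j)) := by
          push_cast; rw [pow_add, mul_pow]; ring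
        rw [e, div_eq_mul_one_div]
        have h3 : 1 / (i:ℝ) ≤ (j + 1) / ((i:ℝ) + j) := by
          rw [div_le_div_iff₀ hi0 (by positivity)]; nlinarith
        have h4 : 1 ≤ (r * z) ^ j := one_le_pow₀ hrz
        have h5 : z ^ i ≤ (r * z) ^ j * z ^ i := le_mul_of_one_le_left (by positivity) h4
        gcongr
    _ = (∑ i ∈ Finset.Icc 1 m, (((m - i : ℕ) : ℝ) + 1) * r ^ (m - i)) * (z ^ m / m) := by
        rw [Finset.sum_mul]
    _ ≤ (∑' j : ℕ, ((j:ℝ) + 1) * r ^ j) * (z ^ m / m) := by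
        gcongr
        rw [← Finset.sum_image (s := Finset.Icc 1 m) (g := fun i => m - i)
          (f := fun j : ℕ => ((j:ℝ) + 1) * r ^ j)]
        · exact hs.sum_le_tsum _ fun j _ => by positivity
        · intro x hx y hy h
          simp only [Finset.coe_Icc, Set.mem_Icc] at hx hy
          simp only at h
          omega

set_option maxHeartbeats 1000000 in
open scoped Nat in
/-- Logarithmic form of the lower bound. -/
theorem aux_loglb (A : ℝ) (hA : 1 ≤ A) (n m : ℕ) (hm : 3 ≤ m) (hmn : m ≤ n)
    (h1 : Real.log n / A ≤ (m : ℝ)) :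
    0 < permProb n m ∧
    Real.exp (-(A + 2)) * ((n:ℝ) / m) - 3 - Real.log n - m * Real.log n ≤
      Real.log (permProb n m) - ((n:ℝ) / m) * (1 - Real.log n) := by
  set ε := Real.exp (-(A + 2)) with hε
  set u := (n : ℝ) / m with hu
  have hm0 : (0:ℝ) < m := by exact_mod_cast (by omega : 0 < m)
  have hn0 : (0:ℝ) < n := by exact_mod_cast (by omega : 0 < n)
  have hum : u * m = n := by rw [hu]; field_simp
  have hu0 : 0 < u := by positivity
  have hε0 : 0 < ε := Real.exp_pos _
  have hε1 : ε ≤ 1 := by rw [hε, Real.exp_le_one_iff]; linarith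
  have hlogn : 0 ≤ Real.log n := Real.log_natCast_nonneg n
  set a := ⌊ε * u⌋₊ with ha
  have ha1 : (a:ℝ) ≤ ε * u := Nat.floor_le (by positivity)
  have ha2 : ε * u < a + 1 := Nat.lt_floor_add_one _
  have ham : (a:ℝ) * m ≤ ε * n := by
    calc (a:ℝ) * m ≤ ε * u * m := by gcongr
      _ = ε * n := by rw [mul_assoc, hum]
  have hamn : a * m ≤ n := by
    have : (a:ℝ) * m ≤ n := ham.trans (by nlinarith)
    exact_mod_cast this
  have ham1 : a * (m - 1) ≤ n := (Nat.mul_le_mul_left a (Nat.sub_le m 1)).trans hamn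
  set b := (n - a * (m - 1)) / m with hb
  have hbdiv := Nat.div_add_mod (n - a * (m - 1)) m
  have hbmod := Nat.mod_lt (n - a * (m - 1)) (show m > 0 by omega)
  set r := (n - a * (m - 1)) % m with hr
  rw [← hb] at hbdiv
  have htot : a * (m - 1) + b * m + r = n := by rw [mul_comm b m]; omega
  have hlb := aux_lb n m a b hm (by omega)
  have hrr : n - (a * (m - 1) + b * m) = r := by omega
  rw [hrr] at hlb
  have hpos : 0 < permProb n m := lt_of_lt_of_le (by positivity) hlb
  refine ⟨hpos, ?_⟩
  have hlog := Real.log_le_log (by positivity) hlb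
  rw [one_div, Real.log_inv, Real.log_mul (by positivity) (by positivity),
    Real.log_mul (by positivity) (by positivity), Real.log_mul (by positivity) (by positivity),
    Real.log_mul (by positivity) (by positivity), Real.log_pow, Real.log_pow] at hlog
  -- the real version of the total
  have htotR : (a:ℝ) * m + b * m + r = n + a := by
    have : a * m + b * m + r = n + a := by
      have : a * m = a * (m - 1) + a := by
        obtain ⟨k, rfl⟩ : ∃ k, m = k + 1 := ⟨m - 1, by omega⟩
        simp; ring
      omega
    exact_mod_cast this
  have hrm : (r:ℝ) ≤ m := by exact_mod_cast hbmod.le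
  have hr0 : (0:ℝ) ≤ r := Nat.cast_nonneg r
  have ha0 : (0:ℝ) ≤ a := Nat.cast_nonneg a
  have hb0 : (0:ℝ) ≤ b := Nat.cast_nonneg b
  -- bound for r!
  have e1 : Real.log (r ! : ℝ) ≤ m * Real.log n := by
    have : (r ! : ℝ) ≤ (n:ℝ) ^ m := by
      have h1 : r ! ≤ r ^ r := Nat.factorial_le_pow r
      have h2 : r ^ r ≤ n ^ r := Nat.pow_le_pow_left (by omega) r
      have h3 : n ^ r ≤ n ^ m := Nat.pow_le_pow_right (by omega) hbmod.le
      exact_mod_cast h1.trans (h2.trans h3)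
    have := Real.log_le_log (by positivity) this
    rwa [Real.log_pow] at this
  -- bound for a
  have e2 : a * Real.log m + Real.log (a ! : ℝ) ≤ a * (Real.log n - (A + 2)) := by
    rcases Nat.eq_zero_or_pos a with h | h
    · simp [h]
    have hap : (0:ℝ) < a := by exact_mod_cast h
    have h1 : Real.log (a ! : ℝ) ≤ a * Real.log a := by
      have : (a ! : ℝ) ≤ (a:ℝ) ^ a := by exact_mod_cast Nat.factorial_le_pow a
      have := Real.log_le_log (by positivity) this
      rwa [Real.log_pow] at this
    have h2 := Real.log_le_log (by positivity) ham
    rw [Real.log_mul (by positivity) (by positivity), Real.log_mul (by positivity) (by positivity),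
      hε, Real.log_exp] at h2
    nlinarith
  have hbm : (b:ℝ) * m ≤ n := by
    have : b * m ≤ n := by omega
    exact_mod_cast this
  have e3 : b * Real.log m + Real.log (b ! : ℝ) ≤ b * Real.log n - b + 1 + Real.log n := by
    rcases Nat.eq_zero_or_pos b with h | h
    · simp [h]; linarith
    have hbp : (0:ℝ) < b := by exact_mod_cast h
    have h1 := aux_logfac b
    have h2 := Real.log_le_log (by positivity) hbm
    rw [Real.log_mul (by positivity) (by positivity)] at h2
    have h3 : Real.log m ≥ 0 := Real.log_natCast_nonneg m
    nlinarith
  have e4 : ((a:ℝ) + b) * Real.log n ≤ u * Real.log n + a * A := by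
    have h2 : Real.log n ≤ A * m := by
      rw [div_le_iff₀ (by linarith)] at h1; linarith
    have h3 : ((a:ℝ) + b) * m ≤ u * m + a := by rw [hum]; linarith
    have h4 : (((a:ℝ) + b) - u) * m ≤ a := by linarith
    have h5 : (((a:ℝ) + b) - u) * Real.log n ≤ a * A := by
      rcases le_total ((a:ℝ) + b) u with h | h
      · have : (((a:ℝ) + b) - u) * Real.log n ≤ 0 :=
          mul_nonpos_of_nonpos_of_nonneg (by linarith) hlogn
        have : 0 ≤ a * A := by positivity
        linarith
      · calc (((a:ℝ) + b) - u) * Real.log n ≤ (((a:ℝ) + b) - u) * (A * m) := by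
              apply mul_le_mul_of_nonneg_left h2; linarith
          _ = (((a:ℝ) + b) - u) * m * A := by ring
          _ ≤ a * A := by gcongr
    linarith
  have e5 : u - 1 - a ≤ b := by
    have : (u - 1 - a) * m ≤ b * m := by
      have : (u - 1 - a) * m = n - m - a * m := by rw [← hum]; ring
      linarith
    exact le_of_mul_le_mul_right this hm0
  have e6 : a * (Real.log n - (A + 2)) = a * Real.log n - a * A - 2 * a := by ring
  have e7 : ((a:ℝ) + b) * Real.log n = a * Real.log n + b * Real.log n := by ring
  have e8 : u * (1 - Real.log n) = u - u * Real.log n := by ring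
  rw [e6] at e2
  rw [e7] at e4
  rw [e8]
  linarith

theorem stmt5 :
    ∀ A : ℝ, 1 ≤ A → ∃ c C : ℝ, 0 < c ∧ 0 < C ∧ ∃ N : ℕ, ∀ n : ℕ, N ≤ n →
      ∀ m : ℕ, 2 ≤ m → m ≤ n → Real.log n / A ≤ (m : ℝ) → (m : ℝ) ≤ A * Real.log n →
      ∀ u : ℝ, u = (n : ℝ) / (m : ℝ) →
      c * u ≤ Real.log (permProb n m) - u * (1 - Real.log n) ∧
        Real.log (permProb n m) - u * (1 - Real.log n) ≤ C * u := by
  intro A hA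
  obtain ⟨K, hK, hsum⟩ := aux_sum A hA
  set ε := Real.exp (-(A + 2)) with hε
  have hε0 : 0 < ε := Real.exp_pos _
  -- eventual facts
  have hl3 : ∀ᶠ n : ℕ in Filter.atTop, Real.log n ^ 3 ≤ (ε / (2 * A * (4 + A))) * (n:ℝ) := by
    have h := (Real.isLittleO_pow_log_id_atTop (n := 3)).bound
      (show 0 < ε / (2 * A * (4 + A)) by positivity)
    have h2 := tendsto_natCast_atTop_atTop (R := ℝ) |>.eventually h
    filter_upwards [h2] with n hn
    simp only [id, Real.norm_eq_abs, Nat.abs_cast] at hn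
    exact (le_abs_self _).trans hn
  have hl1 : ∀ᶠ n : ℕ in Filter.atTop, 3 * A ≤ Real.log n :=
    (Real.tendsto_log_atTop.comp tendsto_natCast_atTop_atTop).eventually_ge_atTop (3 * A)
  obtain ⟨N, hN⟩ := Filter.eventually_atTop.1 (hl3.and hl1)
  refine ⟨ε / 2, K, by positivity, hK, N, ?_⟩
  intro n hn m hm2 hmn h1 h2 u hu
  obtain ⟨g3, g1⟩ := hN n hn
  have hA0 : 0 < A := by linarith
  have hm3R : (3:ℝ) ≤ m := by
    refine le_trans ?_ h1
    rw [le_div_iff₀ hA0]; exact g1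
  have hm3 : 3 ≤ m := by exact_mod_cast hm3R
  have hm0 : (0:ℝ) < m := by linarith
  have hn0 : (0:ℝ) < n := by exact_mod_cast (by omega : 0 < n)
  obtain ⟨hpos, hlow⟩ := aux_loglb A hA n m hm3 hmn h1
  rw [← hu, ← hε] at hlow
  set L := Real.log n with hL
  have hL1 : 1 ≤ L := by linarith
  have hu0 : 0 < u := by rw [hu]; positivity
  constructor
  · have hE : 3 + L + m * L ≤ ε / 2 * u := by
      have a1 : 3 + L + m * L ≤ (4 + A) * L ^ 2 := by nlinarith
      have a2 : (4 + A) * L ^ 2 * m ≤ ε / 2 * n := by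
        calc (4 + A) * L ^ 2 * m ≤ (4 + A) * L ^ 2 * (A * L) := by gcongr
          _ = A * (4 + A) * L ^ 3 := by ring
          _ ≤ A * (4 + A) * ((ε / (2 * A * (4 + A))) * (n:ℝ)) := by gcongr
          _ = ε / 2 * n := by field_simp
      have a3 : (4 + A) * L ^ 2 ≤ ε / 2 * u := by
        rw [hu, ← mul_div_assoc, le_div_iff₀ hm0]; exact a2
      linarith
    linarith
  · set z := Real.exp (L / m) with hz
    have hz1 : Real.exp (1 / A) ≤ z := by
      rw [hz, Real.exp_le_exp, div_le_div_iff₀ hA0 hm0]; linarith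
    have hzm : z ^ m = n := by
      rw [hz, ← Real.exp_nat_mul, mul_div_cancel₀ _ hm0.ne', hL, Real.exp_log hn0]
    have hs := hsum m (by omega) z hz1
    rw [hzm, ← hu] at hs
    have hub := aux_ub n m (by omega) z (Real.exp_pos _)
    have hub2 := Real.log_le_log (mul_pos hpos (pow_pos (Real.exp_pos _) n)) hub
    rw [Real.log_exp, Real.log_mul hpos.ne' (pow_pos (Real.exp_pos _) n).ne', Real.log_pow, hz,
      Real.log_exp] at hub2
    have : (n:ℝ) * (L / m) = u * L := by rw [hu]; ring
    rw [this, ← hz] at hub2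
    linarith
end

section
/- There exist absolute constants c, C > 0 such that for all integers n ≥ m ≥ 1, writing u = n/m, one has c·u·log(1 + (log u)/m) ≤ log( p_{n,m}/ρ(u) ) ≤ C·u·log(1 + (log u)/m). -/
open Real

/-- The weight of a partition: reciprocal of the centralizer order. -/
noncomputable def ptWt (s : Multiset ℕ) : ℝ :=
  ((s.prod : ℝ) * ∏ i ∈ s.toFinset, ((s.count i).factorial : ℝ))⁻¹

/-- The total weight of partitions of `n` with parts at most `m`. -/
noncomputable def ptSum (m n : ℕ) : ℝ :=
  ∑ l : n.Partition, if (∀ c ∈ l.parts, c ≤ m) then ptWt l.parts else 0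

lemma prod_count_ext (s : Multiset ℕ) (T : Finset ℕ) (h : s.toFinset ⊆ T) :
    ∏ i ∈ s.toFinset, ((s.count i).factorial : ℝ) = ∏ i ∈ T, ((s.count i).factorial : ℝ) := by
  apply Finset.prod_subset h
  intro x _ hx
  rw [Multiset.mem_toFinset] at hx
  rw [Multiset.count_eq_zero_of_notMem hx]; simp

lemma part_decomp {n : ℕ} (l : n.Partition) :
    l.parts = l.parts.filter (fun i => 2 ≤ i) +
      Multiset.replicate (n - (l.parts.filter (fun i => 2 ≤ i)).sum) 1 := by
  have h1 : l.parts.filter (fun i => ¬ 2 ≤ i) =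
      Multiset.replicate (l.parts.filter (fun i => ¬ 2 ≤ i)).card 1 := by
    rw [Multiset.eq_replicate]
    refine ⟨rfl, fun b hb => ?_⟩
    rw [Multiset.mem_filter] at hb
    have := l.parts_pos hb.1
    omega
  have h2 := Multiset.filter_add_not (fun i => 2 ≤ i) l.parts
  have h3 : n = (l.parts.filter (fun i => 2 ≤ i)).sum +
      (l.parts.filter (fun i => ¬ 2 ≤ i)).card := by
    conv_lhs => rw [← l.parts_sum, ← h2, Multiset.sum_add, h1]
    simp
  have h4 : n - (l.parts.filter (fun i => 2 ≤ i)).sum =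
      (l.parts.filter (fun i => ¬ 2 ≤ i)).card := by omega
  rw [h4, ← h1, h2]

lemma ptWt_add_replicate (s : Multiset ℕ) (hs : ∀ a ∈ s, 2 ≤ a) (k : ℕ) :
    ptWt (s + Multiset.replicate k 1) =
      ((k.factorial : ℝ) * s.prod * ∏ i ∈ s.toFinset, ((s.count i).factorial : ℝ))⁻¹ := by
  have h1 : 1 ∉ s.toFinset := by
    intro h
    have := hs 1 (by simpa using h)
    omega
  have hT : (s + Multiset.replicate k 1).toFinset ⊆ insert 1 s.toFinset := by
    intro x hx
    simp only [Multiset.mem_toFinset, Multiset.mem_add, Finset.mem_insert] at hx ⊢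
    rcases hx with h | h
    · exact Or.inr h
    · exact Or.inl (Multiset.eq_of_mem_replicate h)
  unfold ptWt
  rw [prod_count_ext _ _ hT, Finset.prod_insert h1]
  have e1 : Multiset.count 1 (s + Multiset.replicate k 1) = k := by
    rw [Multiset.count_add, Multiset.count_replicate_self,
      Multiset.count_eq_zero_of_notMem (by simpa using h1)]; simp
  have e2 : ∏ i ∈ s.toFinset, ((Multiset.count i (s + Multiset.replicate k 1)).factorial : ℝ) =
      ∏ i ∈ s.toFinset, ((s.count i).factorial : ℝ) := by
    apply Finset.prod_congr rfl
    intro i hi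
    have : i ≠ 1 := fun h => h1 (h ▸ hi)
    rw [Multiset.count_add, Multiset.count_replicate, if_neg (Ne.symm this)]; simp
  rw [e1, e2]
  simp
  ring

lemma card_partition_eq {α : Type*} [Fintype α] [DecidableEq α] (l : (Fintype.card α).Partition) :
    ((Finset.univ.filter (fun σ : Equiv.Perm α => σ.partition = l)).card : ℝ) =
      ((Fintype.card α).factorial : ℝ) * ptWt l.parts := by
  set s := l.parts.filter (fun i => 2 ≤ i) with hs
  have hs2 : ∀ a ∈ s, 2 ≤ a := fun a ha => (Multiset.mem_filter.1 ha).2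
  have hd := part_decomp l
  rw [← hs] at hd
  have hsum : s.sum ≤ Fintype.card α := by
    have := congrArg Multiset.sum hd
    rw [l.parts_sum, Multiset.sum_add] at this
    omega
  have hset : (Finset.univ.filter (fun σ : Equiv.Perm α => σ.partition = l)) =
      Finset.univ.filter (fun σ : Equiv.Perm α => σ.cycleType = s) := by
    ext σ
    simp only [Finset.mem_filter, Finset.mem_univ, true_and]
    constructor
    · intro h
      rw [← Equiv.Perm.filter_parts_partition_eq_cycleType, h]
    · intro h
      rw [Nat.Partition.ext_iff, Equiv.Perm.parts_partition, ← Equiv.Perm.sum_cycleType, h, ← hd]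
  rw [hset]
  have h := Equiv.Perm.card_of_cycleType_mul_eq α s
  rw [if_pos ⟨hsum, hs2⟩] at h
  rw [hd, ptWt_add_replicate s hs2]
  have hpos : (((Fintype.card α - s.sum).factorial : ℝ) * s.prod *
      ∏ i ∈ s.toFinset, ((s.count i).factorial : ℝ)) ≠ 0 := by
    have : 0 < s.prod := Multiset.prod_pos <| fun a ha => zero_lt_two.trans_le (hs2 a ha)
    positivity
  rw [← div_eq_mul_inv, eq_div_iff hpos]
  exact_mod_cast h

lemma card_friable {α : Type*} [Fintype α] [DecidableEq α] (m : ℕ) (hm : 1 ≤ m) :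
    (Nat.card {σ : Equiv.Perm α // ∀ c ∈ σ.cycleType, c ≤ m} : ℝ) =
      ((Fintype.card α).factorial : ℝ) * ptSum m (Fintype.card α) := by
  classical
  rw [Nat.card_eq_fintype_card, Fintype.card_subtype]
  rw [Finset.card_eq_sum_card_fiberwise (f := fun σ : Equiv.Perm α => σ.partition)
    (t := Finset.univ) (by intro x _; simp)]
  unfold ptSum
  push_cast
  rw [Finset.mul_sum]
  apply Finset.sum_congr rfl
  intro l _
  rw [mul_ite, mul_zero, ← card_partition_eq]
  have key : ∀ σ : Equiv.Perm α, σ.partition = l →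
      ((∀ c ∈ σ.cycleType, c ≤ m) ↔ (∀ c ∈ l.parts, c ≤ m)) := by
    intro σ h
    rw [← h, Equiv.Perm.parts_partition]
    constructor
    · intro h c hc
      rcases Multiset.mem_add.1 hc with hc | hc
      · exact h c hc
      · rw [Multiset.eq_of_mem_replicate hc]; exact hm
    · intro h c hc
      exact h c (Multiset.mem_add.2 (Or.inl hc))
  split_ifs with hl
  · congr 2
    ext σ
    simp only [Finset.mem_filter, Finset.mem_univ, true_and]
    constructor
    · exact fun h => h.2
    · exact fun h => ⟨(key σ h).2 hl, h⟩
  · rw [Nat.cast_eq_zero, Finset.card_eq_zero]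
    ext σ
    simp only [Finset.mem_filter, Finset.mem_univ, true_and, Finset.notMem_empty, iff_false]
    rintro ⟨h1, h2⟩
    exact hl ((key σ h2).1 h1)

lemma ptWt_cons (s : Multiset ℕ) (j : ℕ) (hj : 1 ≤ j) :
    (j : ℝ) * ((j ::ₘ s).count j : ℝ) * ptWt (j ::ₘ s) = ptWt s := by
  unfold ptWt
  have h1 : s.toFinset ⊆ insert j s.toFinset := Finset.subset_insert _ _
  rw [prod_count_ext s _ h1, Multiset.toFinset_cons]
  have hj' : j ∈ insert j s.toFinset := Finset.mem_insert_self _ _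
  rw [← Finset.mul_prod_erase _ _ hj', ← Finset.mul_prod_erase _ _ hj']
  have e2 : ∏ i ∈ (insert j s.toFinset).erase j, ((Multiset.count i (j ::ₘ s)).factorial : ℝ) =
      ∏ i ∈ (insert j s.toFinset).erase j, ((s.count i).factorial : ℝ) := by
    apply Finset.prod_congr rfl
    intro i hi
    rw [Multiset.count_cons_of_ne (Finset.ne_of_mem_erase hi)]
  rw [e2, Multiset.count_cons_self, Multiset.prod_cons, Nat.factorial_succ]
  push_cast
  have : (j : ℝ) ≠ 0 := by positivity
  have : ((Multiset.count j s : ℝ) + 1) ≠ 0 := by positivity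
  simp only [mul_inv]
  field_simp

lemma ptSum_rec (m n : ℕ) :
    (n : ℝ) * ptSum m n = ∑ j ∈ Finset.Icc 1 (min m n), ptSum m (n - j) := by
  classical
  have h1 : (n : ℝ) * ptSum m n = ∑ j ∈ Finset.Icc 1 n, ∑ l : n.Partition,
      if (∀ c ∈ l.parts, c ≤ m) then (j : ℝ) * (l.parts.count j : ℝ) * ptWt l.parts else 0 := by
    unfold ptSum
    rw [Finset.mul_sum, Finset.sum_comm]
    apply Finset.sum_congr rfl
    intro l _
    split_ifs with h
    · rw [← Finset.sum_mul]
      congr 1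
      have : l.parts.sum = ∑ j ∈ Finset.Icc 1 n, j * l.parts.count j := by
        rw [Finset.sum_multiset_count_of_subset l.parts (Finset.Icc 1 n)]
        · apply Finset.sum_congr rfl
          intro j _
          simp [mul_comm]
        · intro x hx
          rw [Multiset.mem_toFinset] at hx
          exact Finset.mem_Icc.2 ⟨l.parts_pos hx, Nat.Partition.le_of_mem_parts hx⟩
      conv_lhs => rw [← l.parts_sum, this]
      push_cast
      rfl
    · simp
  have h2 : ∑ j ∈ Finset.Icc 1 (min m n), ptSum m (n - j) =
      ∑ j ∈ Finset.Icc 1 n, if j ≤ m then ptSum m (n - j) else 0 := by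
    rw [← Finset.sum_filter]
    apply Finset.sum_congr _ (fun _ _ => rfl)
    ext j
    simp only [Finset.mem_Icc, Finset.mem_filter]
    omega
  rw [h1, h2]
  apply Finset.sum_congr rfl
  intro j hj
  rw [Finset.mem_Icc] at hj
  have h3 : (∑ l : n.Partition,
      if (∀ c ∈ l.parts, c ≤ m) then (j : ℝ) * (l.parts.count j : ℝ) * ptWt l.parts else 0) =
      ∑ l : {l : n.Partition // j ∈ l.parts},
      if (∀ c ∈ l.1.parts, c ≤ m) then
        (j : ℝ) * (l.1.parts.count j : ℝ) * ptWt l.1.parts else 0 := by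
    rw [← Finset.sum_subtype (Finset.univ.filter (fun l : n.Partition => j ∈ l.parts)) (by simp)
      (fun l : n.Partition => if (∀ c ∈ l.parts, c ≤ m) then
        (j : ℝ) * (l.parts.count j : ℝ) * ptWt l.parts else 0)]
    rw [Finset.sum_filter]
    apply Finset.sum_congr rfl
    intro l _
    by_cases hl : j ∈ l.parts
    · rw [if_pos hl]
    · rw [if_neg hl, Multiset.count_eq_zero_of_notMem hl]; simp
  rw [h3, ← (Nat.Partition.partitionWithPartEquiv hj.1 hj.2).symm.sum_comp]
  unfold ptSum
  simp only [Nat.Partition.partitionWithPartEquiv_symm_apply_parts, Multiset.mem_cons,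
    forall_eq_or_imp]
  by_cases hjm : j ≤ m
  · simp only [hjm, true_and, if_true]
    apply Finset.sum_congr rfl
    intro l _
    rw [ptWt_cons _ _ hj.1]
  · simp [hjm]

lemma permProb_eq (n m : ℕ) (hm : 1 ≤ m) : permProb n m = ptSum m n := by
  unfold permProb
  rw [card_friable m hm, Fintype.card_fin]
  field_simp

lemma permProb_zero (m : ℕ) (hm : 1 ≤ m) : permProb 0 m = 1 := by
  rw [permProb_eq 0 m hm]
  simp [ptSum, ptWt]

lemma permProb_rec (n m : ℕ) (hm : 1 ≤ m) :
    (n : ℝ) * permProb n m = ∑ j ∈ Finset.Icc 1 (min m n), permProb (n - j) m := by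
  simp only [permProb_eq _ m hm]
  exact ptSum_rec m n

/-- A globally continuous version of the Dickman function. -/
def GoodD (ρ : ℝ → ℝ) : Prop :=
  Continuous ρ ∧ (∀ t : ℝ, 0 < ρ t) ∧ (∀ t : ℝ, t ≤ 1 → ρ t = 1) ∧
  (∀ t : ℝ, 1 < t → HasDerivAt ρ (-(ρ (t - 1)) / t) t)

/-- Minus the logarithmic derivative of `ρ`. -/
noncomputable def rr (ρ : ℝ → ℝ) (t : ℝ) : ℝ := ρ (t - 1) / (t * ρ t)

lemma goodD_antitone {ρ : ℝ → ℝ} (h : GoodD ρ) : Antitone ρ := by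
  obtain ⟨hc, hp, h1, hd⟩ := h
  have ha : AntitoneOn ρ (Set.Ici 1) := by
    apply antitoneOn_of_deriv_nonpos (convex_Ici 1) hc.continuousOn
    · intro x hx
      rw [interior_Ici] at hx
      exact (hd x hx).differentiableAt.differentiableWithinAt
    · intro x hx
      rw [interior_Ici] at hx
      rw [(hd x hx).deriv]
      have : 0 < x := lt_trans one_pos hx
      have := hp (x - 1)
      rw [neg_div, neg_nonpos]
      positivity
  intro x y hxy
  rcases le_total y 1 with hy | hy
  · rw [h1 y hy, h1 x (hxy.trans hy)]
  · rcases le_total x 1 with hx | hx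
    · rw [h1 x hx, ← h1 1 le_rfl]
      exact ha (Set.mem_Ici.2 le_rfl) hy hy
    · exact ha hx hy hxy

lemma goodD_hasDerivAt_mul {ρ : ℝ → ℝ} (h : GoodD ρ) {t : ℝ} (ht : 1 < t) :
    HasDerivAt (fun x => x * ρ x) (ρ t - ρ (t - 1)) t := by
  have := (hasDerivAt_id t).mul (h.2.2.2 t ht)
  refine this.congr_deriv ?_
  simp only [id]
  have : t ≠ 0 := by linarith
  field_simp
  ring

lemma goodD_integral {ρ : ℝ → ℝ} (h : GoodD ρ) {v : ℝ} (hv : 1 ≤ v) :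
    ∫ x in (v - 1)..v, ρ x = v * ρ v := by
  have hc := h.1
  have hint : ∀ a b : ℝ, IntervalIntegrable ρ MeasureTheory.volume a b :=
    fun a b => hc.intervalIntegrable a b
  have hF : ∀ t, HasDerivAt (fun v => ∫ x in (0:ℝ)..v, ρ x) (ρ t) t := fun t =>
    intervalIntegral.integral_hasDerivAt_right (hint 0 t)
      (hc.stronglyMeasurableAtFilter _ _) hc.continuousAt
  set F : ℝ → ℝ := fun v => ∫ x in (0:ℝ)..v, ρ x with hFdef
  have hG : ∀ t, 1 < t → HasDerivAt (fun x => x * ρ x - (F x - F (x - 1))) 0 t := by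
    intro t ht
    have h2 : HasDerivAt (fun x => F (x - 1)) (ρ (t - 1)) t := by
      simpa using (HasDerivAt.comp_sub_const t 1 (hF (t - 1)))
    have := (goodD_hasDerivAt_mul h ht).sub ((hF t).sub h2)
    refine this.congr_deriv ?_
    ring
  have hFc : Continuous F := continuous_iff_continuousAt.2 fun t => (hF t).continuousAt
  have hconst : v * ρ v - (F v - F (v - 1)) = 1 * ρ 1 - (F 1 - F (1 - 1)) := by
    rcases eq_or_lt_of_le hv with rfl | hv
    · rfl
    obtain ⟨c, _, hc2⟩ := exists_hasDerivAt_eq_slope (fun x => x * ρ x - (F x - F (x - 1)))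
      (fun _ => 0) hv (by fun_prop) (fun x hx => hG x hx.1)
    have : v - 1 ≠ 0 := by linarith
    field_simp at hc2
    linarith
  have hF1 : F 1 = 1 := by
    have : F 1 = ∫ x in (0:ℝ)..1, (1:ℝ) := by
      apply intervalIntegral.integral_congr
      intro x hx
      rw [Set.uIcc_of_le zero_le_one] at hx
      exact h.2.2.1 x hx.2
    rw [this]; simp
  have hF0 : F (1 - 1) = 0 := by simp [hFdef]
  rw [hF1, hF0, h.2.2.1 1 le_rfl] at hconst
  have : ∫ x in (v - 1)..v, ρ x = F v - F (v - 1) :=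
    (intervalIntegral.integral_interval_sub_left (hint _ _) (hint _ _)).symm
  rw [this]; linarith

lemma rr_pos {ρ : ℝ → ℝ} (h : GoodD ρ) {t : ℝ} (ht : 1 ≤ t) : 0 < rr ρ t := by
  have := h.2.1 (t - 1)
  have := h.2.1 t
  unfold rr; positivity

lemma rr_continuousOn {ρ : ℝ → ℝ} (h : GoodD ρ) : ContinuousOn (rr ρ) (Set.Ici 1) := by
  unfold rr
  have hc := h.1
  apply ContinuousOn.div (by fun_prop) (by fun_prop)
  intro x hx
  have := h.2.1 x
  have : (1:ℝ) ≤ x := hx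
  positivity

lemma rr_mono12 {ρ : ℝ → ℝ} (h : GoodD ρ) : MonotoneOn (rr ρ) (Set.Icc 1 2) := by
  have ha : AntitoneOn (fun x => x * ρ x) (Set.Icc 1 2) := by
    have hc := h.1
    apply antitoneOn_of_deriv_nonpos (convex_Icc 1 2) (by fun_prop)
    · intro x hx
      rw [interior_Icc] at hx
      exact (goodD_hasDerivAt_mul h hx.1).differentiableAt.differentiableWithinAt
    · intro x hx
      rw [interior_Icc] at hx
      rw [(goodD_hasDerivAt_mul h hx.1).deriv]
      have := goodD_antitone h (show x - 1 ≤ x by linarith)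
      linarith
  intro x hx y hy hxy
  unfold rr
  rw [h.2.2.1 (x - 1) (by linarith [hx.2]), h.2.2.1 (y - 1) (by linarith [hy.2])]
  have := h.2.1 y
  have : 0 < y := by linarith [hy.1]
  exact one_div_le_one_div_of_le (by positivity) (ha hx hy hxy)

lemma rr_hasDerivAt {ρ : ℝ → ℝ} (h : GoodD ρ) {t : ℝ} (ht : 2 < t) :
    HasDerivAt (rr ρ) (rr ρ t * (rr ρ t - rr ρ (t - 1) - 1 / t)) t := by
  have h1 : HasDerivAt (fun x => ρ (x - 1)) (-(ρ (t - 1 - 1)) / (t - 1)) t := by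
    simpa using (HasDerivAt.comp_sub_const t 1 (h.2.2.2 (t - 1) (by linarith)))
  have hp := h.2.1 t
  have hp1 := h.2.1 (t - 1)
  have ht0 : 0 < t := by linarith
  have ht1 : 0 < t - 1 := by linarith
  have := h1.div (goodD_hasDerivAt_mul h (by linarith : 1 < t)) (by positivity)
  refine this.congr_deriv ?_
  unfold rr
  field_simp
  ring

lemma rr_mul {ρ : ℝ → ℝ} (h : GoodD ρ) (t : ℝ) : rr ρ t * ρ t = ρ (t - 1) / t := by
  have hp := h.2.1 t
  unfold rr
  rcases eq_or_ne t 0 with rfl | ht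
  · simp
  field_simp

lemma rr_key {ρ : ℝ → ℝ} (h : GoodD ρ) {t : ℝ} (ht : 2 ≤ t)
    (hm : MonotoneOn (rr ρ) (Set.Icc 1 t)) : 0 < rr ρ t - rr ρ (t - 1) - 1 / t := by
  have hc := h.1
  have hp := h.2.1 t
  have hsub : Set.Icc (t - 1) t ⊆ Set.Ici (1:ℝ) := fun x hx => by
    have := hx.1
    simp only [Set.mem_Ici]; linarith
  have hrc : ContinuousOn (rr ρ) (Set.Icc (t - 1) t) := (rr_continuousOn h).mono hsub
  have hle : t - 1 ≤ t := by linarith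
  have hrρ : ContinuousOn (fun x => rr ρ x * ρ x) (Set.Icc (t - 1) t) := hrc.mul hc.continuousOn
  have e1 : ∫ x in (t - 1)..t, -(rr ρ x * ρ x) = ρ t - ρ (t - 1) := by
    apply intervalIntegral.integral_eq_sub_of_hasDerivAt_of_le hle hc.continuousOn
    · intro x hx
      rw [rr_mul h, ← neg_div]
      exact h.2.2.2 x (by linarith [hx.1])
    · apply ContinuousOn.intervalIntegrable
      rw [Set.uIcc_of_le hle]
      exact hrρ.neg
  have e2 : ∫ x in (t - 1)..t, (rr ρ t - rr ρ x) * ρ x = ρ t := by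
    have : ∀ x, (rr ρ t - rr ρ x) * ρ x = rr ρ t * ρ x + -(rr ρ x * ρ x) := fun x => by ring
    simp_rw [this]
    rw [intervalIntegral.integral_add, e1, intervalIntegral.integral_const_mul,
      goodD_integral h (by linarith)]
    · have := rr_mul h t
      have ht0 : t ≠ 0 := by linarith
      rw [eq_div_iff ht0] at this
      linarith
    · exact (hc.intervalIntegrable _ _).const_mul _
    · apply ContinuousOn.intervalIntegrable
      rw [Set.uIcc_of_le hle]
      exact hrρ.neg
  have e3 : ∫ x in (t - 1)..t, (rr ρ t - rr ρ (t - 1)) * ρ x =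
      (rr ρ t - rr ρ (t - 1)) * (t * ρ t) := by
    rw [intervalIntegral.integral_const_mul, goodD_integral h (by linarith)]
  have c1 : ContinuousOn (fun x => (rr ρ t - rr ρ x) * ρ x) (Set.Icc (t - 1) t) :=
    (continuousOn_const.sub hrc).mul hc.continuousOn
  have c2 : ContinuousOn (fun x => (rr ρ t - rr ρ (t - 1)) * ρ x) (Set.Icc (t - 1) t) :=
    continuousOn_const.mul hc.continuousOn
  have hpt : ∀ x ∈ Set.Icc (t - 1) t,
      (rr ρ t - rr ρ x) * ρ x ≤ (rr ρ t - rr ρ (t - 1)) * ρ x := by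
    intro x hx
    apply mul_le_mul_of_nonneg_right _ (h.2.1 x).le
    have := hm ⟨by linarith, by linarith⟩ ⟨hsub hx, hx.2⟩ hx.1
    linarith
  have w : ρ t ≤ (rr ρ t - rr ρ (t - 1)) * (t * ρ t) := by
    rw [← e3]
    nth_rewrite 1 [← e2]
    apply intervalIntegral.integral_mono_on hle
    · exact ContinuousOn.intervalIntegrable (by rwa [Set.uIcc_of_le hle])
    · exact ContinuousOn.intervalIntegrable (by rwa [Set.uIcc_of_le hle])
    · exact hpt
  have hpos : 0 < rr ρ t - rr ρ (t - 1) := by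
    by_contra hcon
    push Not at hcon
    have : (rr ρ t - rr ρ (t - 1)) * (t * ρ t) ≤ 0 :=
      mul_nonpos_of_nonpos_of_nonneg hcon (by positivity)
    linarith
  have s : ρ t < (rr ρ t - rr ρ (t - 1)) * (t * ρ t) := by
    rw [← e3]
    nth_rewrite 1 [← e2]
    apply intervalIntegral.integral_lt_integral_of_continuousOn_of_le_of_exists_lt
      (by linarith) c1 c2
    · intro x hx
      exact hpt x ⟨hx.1.le, hx.2⟩
    · refine ⟨t, ⟨by linarith, le_rfl⟩, ?_⟩
      simp only [sub_self, zero_mul]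
      positivity
  have ht0 : 0 < t := by linarith
  have : 1 < (rr ρ t - rr ρ (t - 1)) * t := by
    by_contra hcon
    push Not at hcon
    have := mul_le_mul_of_nonneg_right hcon hp.le
    linarith
  rw [sub_pos, div_lt_iff₀ ht0]
  exact this

lemma rr_q_pos {ρ : ℝ → ℝ} (h : GoodD ρ) {t : ℝ} (ht : 2 ≤ t) :
    0 < rr ρ t - rr ρ (t - 1) - 1 / t := by
  by_contra hcon
  push Not at hcon
  set q : ℝ → ℝ := fun t => rr ρ t - rr ρ (t - 1) - 1 / t with hq
  have hqc : ContinuousOn q (Set.Ici 2) := by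
    have h1 : ContinuousOn (rr ρ) (Set.Ici 2) := (rr_continuousOn h).mono (by
      intro x hx
      have : (2:ℝ) ≤ x := hx
      simp only [Set.mem_Ici]; linarith)
    have h2 : ContinuousOn (fun t => rr ρ (t - 1)) (Set.Ici 2) := by
      apply (rr_continuousOn h).comp (by fun_prop)
      intro x hx
      have : (2:ℝ) ≤ x := hx
      simp only [Set.mem_Ici]; linarith
    refine (h1.sub h2).sub ?_
    apply ContinuousOn.div (by fun_prop) (by fun_prop)
    intro x hx
    have : (2:ℝ) ≤ x := hx
    linarith
  set S : Set ℝ := Set.Ici 2 ∩ q ⁻¹' (Set.Iic 0) with hS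
  have hScl : IsClosed S := hqc.preimage_isClosed_of_isClosed isClosed_Ici isClosed_Iic
  have hSne : S.Nonempty := ⟨t, ht, hcon⟩
  have hSb : BddBelow S := ⟨2, fun x hx => hx.1⟩
  have hmem := hScl.csInf_mem hSne hSb
  set t0 := sInf S with ht0
  have ht02 : 2 ≤ t0 := hmem.1
  have hlt : ∀ x, 2 ≤ x → x < t0 → 0 < q x := by
    intro x hx hxt
    by_contra hc
    push Not at hc
    have : t0 ≤ x := csInf_le hSb ⟨hx, hc⟩
    linarith
  have hm2 : MonotoneOn (rr ρ) (Set.Icc 2 t0) := by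
    apply monotoneOn_of_deriv_nonneg (convex_Icc 2 t0)
    · exact (rr_continuousOn h).mono (fun x hx => by
        have := hx.1
        simp only [Set.mem_Ici]; linarith)
    · intro x hx
      rw [interior_Icc] at hx
      exact (rr_hasDerivAt h hx.1).differentiableAt.differentiableWithinAt
    · intro x hx
      rw [interior_Icc] at hx
      rw [(rr_hasDerivAt h hx.1).deriv]
      have h1 := hlt x hx.1.le hx.2
      have h2 := rr_pos h (show 1 ≤ x by linarith [hx.1])
      exact (mul_pos h2 h1).le
  have hm : MonotoneOn (rr ρ) (Set.Icc 1 t0) := by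
    have := (rr_mono12 h).union_right hm2 (c := 2) ⟨⟨by norm_num, le_rfl⟩, fun x hx => hx.2⟩
      ⟨⟨le_rfl, ht02⟩, fun x hx => hx.1⟩
    rwa [Set.Icc_union_Icc_eq_Icc (by norm_num) ht02] at this
  have := rr_key h ht02 hm
  have h2 : q t0 ≤ 0 := hmem.2
  exact absurd h2 (not_le.2 this)

lemma rr_mono {ρ : ℝ → ℝ} (h : GoodD ρ) : MonotoneOn (rr ρ) (Set.Ici 1) := by
  have hm2 : MonotoneOn (rr ρ) (Set.Ici 2) := by
    apply monotoneOn_of_deriv_nonneg (convex_Ici 2)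
    · exact (rr_continuousOn h).mono (fun x hx => by
        have : (2:ℝ) ≤ x := hx
        simp only [Set.mem_Ici]; linarith)
    · intro x hx
      rw [interior_Ici] at hx
      exact (rr_hasDerivAt h hx).differentiableAt.differentiableWithinAt
    · intro x hx
      rw [interior_Ici] at hx
      have hx' : (2:ℝ) < x := hx
      rw [(rr_hasDerivAt h hx).deriv]
      exact (mul_pos (rr_pos h (by linarith)) (rr_q_pos h hx'.le)).le
  have := (rr_mono12 h).union_right hm2 (c := 2) ⟨⟨by norm_num, le_rfl⟩, fun x hx => hx.2⟩
      ⟨Set.mem_Ici.2 le_rfl, fun x hx => hx⟩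
  rwa [Set.Icc_union_Ici_eq_Ici (by norm_num)] at this

lemma rr_one_le {ρ : ℝ → ℝ} (h : GoodD ρ) {t : ℝ} (ht : 1 ≤ t) : 1 ≤ rr ρ t := by
  have h1 : rr ρ 1 = 1 := by
    unfold rr
    rw [h.2.2.1 1 le_rfl, h.2.2.1 _ (by norm_num)]; norm_num
  rw [← h1]
  exact rr_mono h (Set.mem_Ici.2 le_rfl) ht ht

lemma log_hasDerivAt {ρ : ℝ → ℝ} (h : GoodD ρ) {t : ℝ} (ht : 1 < t) :
    HasDerivAt (fun x => Real.log (ρ x)) (-rr ρ t) t := by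
  have := (h.2.2.2 t ht).log (h.2.1 t).ne'
  refine this.congr_deriv ?_
  unfold rr
  have := (h.2.1 t).ne'
  have : t ≠ 0 := by linarith
  field_simp

lemma log_continuous {ρ : ℝ → ℝ} (h : GoodD ρ) : Continuous (fun x => Real.log (ρ x)) :=
  h.1.log (fun x => (h.2.1 x).ne')

lemma log_diff {ρ : ℝ → ℝ} (h : GoodD ρ) {x y : ℝ} (hx : 1 ≤ x) (hxy : x ≤ y) :
    (y - x) * rr ρ x ≤ Real.log (ρ x) - Real.log (ρ y) ∧
    Real.log (ρ x) - Real.log (ρ y) ≤ (y - x) * rr ρ y := by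
  rcases eq_or_lt_of_le hxy with rfl | hlt
  · simp
  obtain ⟨c, hc, hc2⟩ := exists_hasDerivAt_eq_slope (fun x => Real.log (ρ x))
    (fun t => -rr ρ t) hlt (log_continuous h).continuousOn
    (fun z hz => log_hasDerivAt h (by linarith [hz.1]))
  have hyx : 0 < y - x := by linarith
  rw [eq_div_iff hyx.ne'] at hc2
  have m1 := rr_mono h (Set.mem_Ici.2 hx) (Set.mem_Ici.2 (by linarith [hc.1] : (1:ℝ) ≤ c)) hc.1.le
  have m2 := rr_mono h (Set.mem_Ici.2 (by linarith [hc.1] : (1:ℝ) ≤ c))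
    (Set.mem_Ici.2 (by linarith : (1:ℝ) ≤ y)) hc.2.le
  constructor <;> nlinarith

lemma rho_le_exp {ρ : ℝ → ℝ} (h : GoodD ρ) {x y : ℝ} (hxy : x ≤ y) (hy : 1 ≤ y) :
    ρ x ≤ ρ y * Real.exp ((y - x) * rr ρ y) := by
  have key : ∀ z, 1 ≤ z → z ≤ y → ρ z ≤ ρ y * Real.exp ((y - z) * rr ρ y) := by
    intro z hz hzy
    have := (log_diff h hz hzy).2
    rw [← Real.exp_log (h.2.1 z), ← Real.exp_log (h.2.1 y), ← Real.exp_add]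
    apply Real.exp_le_exp.2
    linarith
  rcases le_total 1 x with hx | hx
  · exact key x hx hxy
  · rw [h.2.2.1 x hx, ← h.2.2.1 1 le_rfl]
    refine (key 1 le_rfl hy).trans ?_
    apply mul_le_mul_of_nonneg_left _ (h.2.1 y).le
    apply Real.exp_le_exp.2
    apply mul_le_mul_of_nonneg_right _ (rr_pos h hy).le
    linarith

lemma rho_ge_exp {ρ : ℝ → ℝ} (h : GoodD ρ) {x y z : ℝ} (hz : 1 ≤ z) (hzx : z ≤ x) (hxy : x ≤ y) :
    ρ y * Real.exp ((y - x) * rr ρ z) ≤ ρ x := by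
  have h1 := (log_diff h (hz.trans hzx) hxy).1
  have h2 := rr_mono h (Set.mem_Ici.2 hz) (Set.mem_Ici.2 (hz.trans hzx)) hzx
  have h3 : (y - x) * rr ρ z ≤ (y - x) * rr ρ x :=
    mul_le_mul_of_nonneg_left h2 (by linarith)
  rw [← Real.exp_log (h.2.1 x)]
  conv_lhs => rw [← Real.exp_log (h.2.1 y), ← Real.exp_add]
  apply Real.exp_le_exp.2
  linarith

lemma integral_exp_lin (t r : ℝ) (hr : 0 < r) :
    ∫ x in (t - 1)..t, Real.exp ((t - x) * r) = (Real.exp r - 1) / r := by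
  have : ∀ x ∈ Set.uIcc (t - 1) t,
      HasDerivAt (fun x => -(Real.exp ((t - x) * r)) / r) (Real.exp ((t - x) * r)) x := by
    intro x _
    have h1 : HasDerivAt (fun x => (t - x) * r) (-r) x := by
      have := ((hasDerivAt_id x).const_sub t).mul_const r
      simpa using this
    have := (h1.exp.neg).div_const r
    refine this.congr_deriv ?_
    field_simp
  rw [intervalIntegral.integral_eq_sub_of_hasDerivAt this]
  · simp; ring
  · apply Continuous.intervalIntegrable; fun_prop

lemma rr_exp_ge {ρ : ℝ → ℝ} (h : GoodD ρ) {t : ℝ} (ht : 1 ≤ t) :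
    1 + t * rr ρ t ≤ Real.exp (rr ρ t) := by
  have hr := rr_pos h ht
  have hc := h.1
  have h1 : ∫ x in (t - 1)..t, ρ x ≤ ∫ x in (t - 1)..t, ρ t * Real.exp ((t - x) * rr ρ t) := by
    apply intervalIntegral.integral_mono_on (by linarith) (hc.intervalIntegrable _ _)
    · apply Continuous.intervalIntegrable; fun_prop
    · intro x hx
      exact rho_le_exp h hx.2 ht
  rw [intervalIntegral.integral_const_mul, integral_exp_lin _ _ hr, goodD_integral h ht,
    mul_comm t, mul_le_mul_iff_right₀ (h.2.1 t), le_div_iff₀ hr] at h1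
  linarith

lemma rr_exp_le {ρ : ℝ → ℝ} (h : GoodD ρ) {t : ℝ} (ht : 1 ≤ t) :
    Real.exp (rr ρ t) ≤ 1 + (t + 1) * rr ρ t := by
  have hr := rr_pos h ht
  have hc := h.1
  have h1 : ∫ x in (t + 1 - 1)..(t + 1), ρ (t + 1) * Real.exp ((t + 1 - x) * rr ρ t) ≤
      ∫ x in (t + 1 - 1)..(t + 1), ρ x := by
    apply intervalIntegral.integral_mono_on (by linarith) _ (hc.intervalIntegrable _ _)
    · intro x hx
      exact rho_ge_exp h ht (by linarith [hx.1]) hx.2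
    · apply Continuous.intervalIntegrable; fun_prop
  rw [intervalIntegral.integral_const_mul, integral_exp_lin _ _ hr, goodD_integral h (by linarith),
    mul_comm (t + 1), mul_le_mul_iff_right₀ (h.2.1 (t + 1)), div_le_iff₀ hr] at h1
  linarith

lemma rr_ge_log {ρ : ℝ → ℝ} (h : GoodD ρ) {t : ℝ} (ht : 1 ≤ t) : Real.log t ≤ rr ρ t := by
  rw [Real.log_le_iff_le_exp (by linarith)]
  have := rr_exp_ge h ht
  have := rr_one_le h ht
  nlinarith

lemma rr_ge {ρ : ℝ → ℝ} (h : GoodD ρ) {t : ℝ} (ht : 1 ≤ t) :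
    Real.log t + Real.log (1 + Real.log t) - 1 ≤ rr ρ t := by
  have h1 := rr_exp_ge h ht
  have h2 := rr_one_le h ht
  have h3 := rr_ge_log h ht
  have hl := Real.log_nonneg ht
  rw [← Real.log_mul (by linarith) (by linarith), sub_le_iff_le_add,
    Real.log_le_iff_le_exp (by positivity), Real.exp_add]
  have he : (2:ℝ) ≤ Real.exp 1 := by linarith [Real.add_one_le_exp 1]
  have : t * (1 + Real.log t) ≤ (1 + t * rr ρ t) * 2 := by nlinarith
  nlinarith [Real.exp_pos (rr ρ t)]

lemma rr_le_log {ρ : ℝ → ℝ} (h : GoodD ρ) {t : ℝ} (ht : 1 ≤ t) :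
    rr ρ t ≤ 3 * (1 + Real.log t) := by
  have h1 := rr_exp_le h ht
  have h2 := rr_one_le h ht
  set r := rr ρ t
  have hl := Real.log_nonneg ht
  have h3 : Real.exp r ≤ 3 * t * r := by nlinarith
  have h4 : r ≤ Real.log (3 * t * r) := by
    rw [Real.le_log_iff_exp_le (by positivity)]; exact h3
  rw [Real.log_mul (by positivity) (by positivity), Real.log_mul (by positivity) (by positivity)]
    at h4
  have h5 : Real.log r ≤ r / 2 := by
    have := Real.log_le_sub_one_of_pos (show 0 < r / 2 by positivity)
    rw [Real.log_div (by positivity) (by norm_num)] at this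
    have := Real.log_two_lt_d9
    linarith
  have h6 : Real.log 3 ≤ 1.3 := by
    rw [Real.log_le_iff_le_exp (by norm_num)]
    have := Real.exp_one_gt_d9
    have h7 : Real.exp 1.3 = Real.exp 1 * Real.exp 0.3 := by rw [← Real.exp_add]; norm_num
    have := Real.add_one_le_exp 0.3
    rw [h7]; nlinarith
  linarith

lemma rr_le {ρ : ℝ → ℝ} (h : GoodD ρ) {t : ℝ} (ht : 1 ≤ t) :
    rr ρ t ≤ Real.log t + Real.log (1 + Real.log t) + 3 := by
  have h1 := rr_exp_le h ht
  have h2 := rr_one_le h ht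
  have h3 := rr_le_log h ht
  have hl := Real.log_nonneg ht
  set r := rr ρ t
  rw [← Real.log_mul (by linarith) (by linarith), ← sub_le_iff_le_add,
    Real.le_log_iff_exp_le (by positivity), Real.exp_sub, div_le_iff₀ (Real.exp_pos _)]
  have h3 : Real.exp r ≤ 3 * t * r := by nlinarith
  have h9 : (9:ℝ) ≤ Real.exp 3 := by
    have := Real.exp_one_gt_d9
    have h7 : Real.exp 3 = Real.exp 1 * Real.exp 1 * Real.exp 1 := by
      rw [← Real.exp_add, ← Real.exp_add]; norm_num
    rw [h7]
    have : (7:ℝ) ≤ Real.exp 1 * Real.exp 1 := by nlinarith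
    nlinarith
  have h10 : 3 * t * r ≤ t * (1 + Real.log t) * 9 := by
    have := mul_le_mul_of_nonneg_left h3 (show 0 ≤ 3 * t by positivity)
    nlinarith
  have : t * (1 + Real.log t) * 9 ≤ t * (1 + Real.log t) * Real.exp 3 :=
    mul_le_mul_of_nonneg_left h9 (by positivity)
  linarith

lemma log_rho_bound {ρ : ℝ → ℝ} (h : GoodD ρ) {u : ℝ} (hu : 1 ≤ u) :
    |Real.log (ρ u) + u * Real.log u + u * Real.log (1 + Real.log u)| ≤ 3 * u := by
  rcases eq_or_lt_of_le hu with rfl | hu1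
  · simp [h.2.2.1 1 le_rfl]
  have hlog : ∀ t : ℝ, 1 ≤ t → 0 ≤ Real.log t := fun t ht => Real.log_nonneg ht
  have hder : ∀ t, 1 < t → HasDerivAt
      (fun u => Real.log (ρ u) + u * Real.log u + u * Real.log (1 + Real.log u))
      (-rr ρ t + (Real.log t + 1) + (Real.log (1 + Real.log t) + 1 / (1 + Real.log t))) t := by
    intro t ht
    have ht0 : t ≠ 0 := by linarith
    have hl := hlog t ht.le
    have hl1 : 1 + Real.log t ≠ 0 := by linarith
    have d1 := log_hasDerivAt h ht
    have d2 := (hasDerivAt_id t).mul (Real.hasDerivAt_log ht0)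
    have d3 := (hasDerivAt_id t).mul (((Real.hasDerivAt_log ht0).const_add 1).log hl1)
    refine ((d1.add d2).add d3).congr_deriv ?_
    simp only [id]
    field_simp
  obtain ⟨c, hc, hc2⟩ := exists_hasDerivAt_eq_slope _ _ hu1 (by
      have := (log_continuous h).continuousOn (s := Set.Icc 1 u)
      have hx : ∀ x ∈ Set.Icc 1 u, x ≠ 0 := fun x hx => by linarith [hx.1]
      have hl : ContinuousOn Real.log (Set.Icc 1 u) := fun x hx' =>
        (Real.continuousAt_log (hx x hx')).continuousWithinAt
      refine (this.add (continuousOn_id.mul hl)).add (continuousOn_id.mul ?_)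
      apply ContinuousOn.log (continuousOn_const.add hl)
      intro x hx'
      have := hlog x hx'.1
      show 1 + Real.log x ≠ 0
      linarith)
    (fun z hz => hder z hz.1)
  have h11 : Real.log (ρ 1) = 0 := by rw [h.2.2.1 1 le_rfl]; simp
  rw [eq_div_iff (by linarith)] at hc2
  simp only [h11, Real.log_one, mul_zero, add_zero, sub_zero] at hc2
  rw [← hc2]
  have hcc : 1 ≤ c := hc.1.le
  have b1 := rr_ge h hcc
  have b2 := rr_le h hcc
  have hl := hlog c hcc
  have b3 : 0 < 1 / (1 + Real.log c) := by positivity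
  have b4 : 1 / (1 + Real.log c) ≤ 1 := by
    rw [div_le_one (by positivity)]; linarith
  rw [abs_mul, abs_of_pos (show 0 < u - 1 by linarith)]
  apply mul_le_mul _ (by linarith) (by linarith) (by norm_num)
  rw [abs_le]
  constructor <;> linarith

/-- The recurrence satisfied by `p_{n,m}` for fixed `m`. -/
def IsP (m : ℕ) (p : ℕ → ℝ) : Prop :=
  p 0 = 1 ∧ ∀ n : ℕ, (n : ℝ) * p n = ∑ i ∈ Finset.range (min m n), p (n - (i + 1))

lemma isP_one {m : ℕ} {p : ℕ → ℝ} (hp : IsP m p) : ∀ n, n ≤ m → p n = 1 := by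
  intro n
  induction n using Nat.strong_induction_on with
  | _ n ih =>
    intro hn
    rcases Nat.eq_zero_or_pos n with rfl | hn0
    · exact hp.1
    have h := hp.2 n
    rw [min_eq_right hn, Finset.sum_congr rfl (g := fun _ => (1:ℝ))] at h
    · simp only [Finset.sum_const, Finset.card_range, nsmul_eq_mul, mul_one] at h
      have : (n:ℝ) ≠ 0 := by positivity
      exact mul_left_cancel₀ this (by linarith)
    · intro i hi
      rw [Finset.mem_range] at hi
      exact ih _ (by omega) (by omega)

lemma isP_pos {m : ℕ} (hm : 1 ≤ m) {p : ℕ → ℝ} (hp : IsP m p) : ∀ n, 0 < p n := by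
  intro n
  induction n using Nat.strong_induction_on with
  | _ n ih =>
    rcases Nat.eq_zero_or_pos n with rfl | hn0
    · rw [hp.1]; norm_num
    have h := hp.2 n
    have hpos : 0 < ∑ i ∈ Finset.range (min m n), p (n - (i + 1)) := by
      apply Finset.sum_pos
      · intro i hi
        exact ih _ (by omega)
      · rw [Finset.nonempty_range_iff]; omega
    rw [← h] at hpos
    have hn' : (0:ℝ) < n := by positivity
    exact (mul_pos_iff_of_pos_left hn').1 hpos

lemma integral_scaled {ρ : ℝ → ℝ} (h : GoodD ρ) {v w : ℝ} (hv : 1 ≤ v) (hw : 0 < w) :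
    ∫ s in (0:ℝ)..w, ρ (v - s / w) = w * v * ρ v := by
  rw [intervalIntegral.integral_comp_sub_div _ hw.ne' v, div_self hw.ne', zero_div, sub_zero,
    goodD_integral h hv, smul_eq_mul, mul_assoc]

lemma isP_upper {ρ : ℝ → ℝ} (h : GoodD ρ) {m : ℕ} {p : ℕ → ℝ} (hp : IsP m p) :
    ∀ n, p n ≤ ρ (((n:ℝ) + 1) / ((m:ℝ) + 1)) := by
  intro n
  induction n using Nat.strong_induction_on with
  | _ n ih =>
    have hw : (0:ℝ) < (m:ℝ) + 1 := by positivity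
    rcases le_or_gt n m with hn | hn
    · rw [isP_one hp n hn, h.2.2.1]
      rw [div_le_one hw]
      have : (n:ℝ) ≤ m := by exact_mod_cast hn
      linarith
    set v := ((n:ℝ) + 1) / ((m:ℝ) + 1) with hv
    have hnm : (m:ℝ) ≤ n := by exact_mod_cast hn.le
    have hv1 : 1 ≤ v := by
      rw [hv, le_div_iff₀ hw]; linarith
    have hmono : Monotone (fun s : ℝ => ρ (v - s / ((m:ℝ) + 1))) := by
      intro x y hxy
      apply goodD_antitone h
      have : x / ((m:ℝ) + 1) ≤ y / ((m:ℝ) + 1) := by gcongr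
      linarith
    have h1 := (hmono.monotoneOn (Set.Icc (0:ℝ) (0 + ((m + 1 : ℕ):ℝ)))).sum_le_integral
    rw [zero_add] at h1
    push_cast at h1
    rw [integral_scaled h hv1 hw, Finset.sum_range_succ'] at h1
    have h2 := hp.2 n
    rw [min_eq_left hn.le] at h2
    have h3 : ∑ i ∈ Finset.range m, p (n - (i + 1)) ≤
        ∑ i ∈ Finset.range m, ρ (v - (0 + ((i + 1 : ℕ):ℝ)) / ((m:ℝ) + 1)) := by
      apply Finset.sum_le_sum
      intro i hi
      rw [Finset.mem_range] at hi
      refine (ih (n - (i + 1)) (by omega)).trans (le_of_eq ?_)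
      congr 1
      rw [Nat.cast_sub (by omega), hv]
      ring
    have h4 : ((m:ℝ) + 1) * v = n + 1 := by rw [hv]; field_simp
    rw [h4] at h1
    simp only [Nat.cast_zero, add_zero, zero_div, sub_zero] at h1
    have hn0 : (0:ℝ) < n := by
      have : 0 < n := by omega
      exact_mod_cast this
    have : (n:ℝ) * p n ≤ n * ρ v := by linarith
    exact le_of_mul_le_mul_left this hn0

lemma rho_12 {ρ : ℝ → ℝ} (h : GoodD ρ) {v : ℝ} (h1 : 1 ≤ v) (h2 : v ≤ 2) :
    ρ v = 1 - Real.log v := by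
  rcases eq_or_lt_of_le h1 with rfl | h1
  · simp [h.2.2.1 1 le_rfl]
  have hder : ∀ t ∈ Set.Ioo 1 v, HasDerivAt (fun x => ρ x + Real.log x) 0 t := by
    intro t ht
    have ht0 : t ≠ 0 := by linarith [ht.1]
    refine ((h.2.2.2 t ht.1).add (Real.hasDerivAt_log ht0)).congr_deriv ?_
    rw [h.2.2.1 (t - 1) (by linarith [ht.2])]
    field_simp
    ring
  obtain ⟨c, hc, hc2⟩ := exists_hasDerivAt_eq_slope _ _ h1 (by
    refine h.1.continuousOn.add ?_
    intro x hx
    exact (Real.continuousAt_log (by linarith [hx.1])).continuousWithinAt) hder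
  rw [eq_div_iff (by linarith)] at hc2
  simp only [h.2.2.1 1 le_rfl, Real.log_one, zero_mul] at hc2
  linarith

lemma isP_step {m : ℕ} {p : ℕ → ℝ} (hp : IsP m p) {n : ℕ} (hn : m ≤ n) :
    ((n:ℝ) + 1) * p (n + 1) = (n + 1) * p n - p (n - m) := by
  have h1 := hp.2 (n + 1)
  have h2 := hp.2 n
  rw [min_eq_left (by omega)] at h1
  rw [min_eq_left (by omega)] at h2
  push_cast at h1
  have e : ∑ i ∈ Finset.range (m + 1), p (n - i) = ∑ i ∈ Finset.range m, p (n - i) + p (n - m) :=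
    Finset.sum_range_succ _ _
  rw [Finset.sum_range_succ'] at e
  simp only [Nat.sub_zero] at e
  linarith

lemma isP_lower12 {m : ℕ} {p : ℕ → ℝ} (hm : 1 ≤ m) (hp : IsP m p) {a : ℝ} (ha : 0 < a)
    (ha2 : a ≤ 1 / 2) (n : ℕ) (hn : m ≤ n) :
    n ≤ 2 * m → 1 - Real.log (((n:ℝ) + a) / ((m:ℝ) + a)) ≤ p n := by
  have hm0 : (0:ℝ) < m := by exact_mod_cast hm
  induction n, hn using Nat.le_induction with
  | base =>
    intro _
    rw [isP_one hp m le_rfl, div_self (by positivity)]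
    simp
  | succ n hn ih =>
    intro hn2
    have ih := ih (by omega)
    have hst := isP_step hp hn
    rw [isP_one hp (n - m) (by omega)] at hst
    have hn0 : (0:ℝ) < n := lt_of_lt_of_le hm0 (by exact_mod_cast hn)
    have e : p (n + 1) = p n - 1 / ((n:ℝ) + 1) := by
      field_simp
      linarith
    rw [e]
    push_cast
    rw [Real.log_div (by positivity) (by positivity)] at ih ⊢
    have key : 1 / ((n:ℝ) + 1) ≤ Real.log ((n:ℝ) + 1 + a) - Real.log ((n:ℝ) + a) := by
      rw [← Real.log_div (by positivity) (by positivity)]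
      have := Real.le_log_one_add_of_nonneg (show 0 ≤ 1 / ((n:ℝ) + a) by positivity)
      have e2 : 1 + 1 / ((n:ℝ) + a) = ((n:ℝ) + 1 + a) / ((n:ℝ) + a) := by field_simp; ring
      rw [e2] at this
      refine le_trans ?_ this
      have e3 : 2 * (1 / ((n:ℝ) + a)) / (1 / ((n:ℝ) + a) + 2) = 1 / (n + a + 1 / 2) := by
        field_simp; ring
      rw [e3]
      apply one_div_le_one_div_of_le (by positivity)
      linarith
    linarith

lemma rho_convex {ρ : ℝ → ℝ} (h : GoodD ρ) : ConvexOn ℝ (Set.Ici 1) ρ := by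
  apply MonotoneOn.convexOn_of_deriv (convex_Ici 1) h.1.continuousOn
  · intro x hx
    rw [interior_Ici] at hx
    exact (h.2.2.2 x hx).differentiableAt.differentiableWithinAt
  · rw [interior_Ici]
    intro x hx y hy hxy
    rw [(h.2.2.2 x hx).deriv, (h.2.2.2 y hy).deriv, neg_div, neg_div, neg_le_neg_iff]
    have hx' : (1:ℝ) < x := hx
    have := goodD_antitone h (show x - 1 ≤ y - 1 by linarith)
    have := h.2.1 (x - 1)
    gcongr

lemma trap_cell {f : ℝ → ℝ} (hc : Continuous f) (x : ℝ)
    (hf : ∀ s ∈ Set.Icc x (x + 1), f s ≤ (x + 1 - s) * f x + (s - x) * f (x + 1)) :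
    ∫ s in x..(x + 1), f s ≤ (f x + f (x + 1)) / 2 := by
  have h1 : ∫ s in x..(x + 1), f s ≤
      ∫ s in x..(x + 1), ((x + 1 - s) * f x + (s - x) * f (x + 1)) := by
    apply intervalIntegral.integral_mono_on (by linarith) (hc.intervalIntegrable _ _) _ hf
    apply Continuous.intervalIntegrable; fun_prop
  refine h1.trans (le_of_eq ?_)
  have : ∀ s ∈ Set.uIcc x (x + 1), HasDerivAt
      (fun s => -(x + 1 - s) ^ 2 / 2 * f x + (s - x) ^ 2 / 2 * f (x + 1))
      ((x + 1 - s) * f x + (s - x) * f (x + 1)) s := by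
    intro s _
    have d1 := ((((hasDerivAt_id s).const_sub (x + 1)).pow 2).neg.div_const 2).mul_const (f x)
    have d2 := ((((hasDerivAt_id s).sub_const x).pow 2).div_const 2).mul_const (f (x + 1))
    refine (d1.add d2).congr_deriv ?_
    simp
  rw [intervalIntegral.integral_eq_sub_of_hasDerivAt this]
  · ring
  · apply Continuous.intervalIntegrable; fun_prop

lemma isP_lower {ρ : ℝ → ℝ} (h : GoodD ρ) {m : ℕ} {p : ℕ → ℝ} (hm : 1 ≤ m) (hp : IsP m p)
    {a B : ℝ} (ha : 0 < a) (ha2 : a ≤ 1 / 20) (haB : a * B ≤ 1) {N : ℕ}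
    (hN : rr ρ ((N:ℝ) / m) ≤ B * m) :
    ∀ n, n ≤ N → ρ (((n:ℝ) + a) / ((m:ℝ) + a)) ≤ p n := by
  intro n
  have hm0 : (0:ℝ) < m := by exact_mod_cast hm
  have hm1 : (1:ℝ) ≤ m := by exact_mod_cast hm
  have hw : (0:ℝ) < (m:ℝ) + a := by positivity
  induction n using Nat.strong_induction_on with
  | _ n ih =>
  intro hnN
  rcases le_or_gt n m with hn | hn
  · rw [isP_one hp n hn, h.2.2.1]
    rw [div_le_one hw]
    have : (n:ℝ) ≤ m := by exact_mod_cast hn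
    linarith
  have hnm : (m:ℝ) ≤ n := by exact_mod_cast hn.le
  have hn0 : (0:ℝ) < n := lt_of_lt_of_le hm0 hnm
  set v := ((n:ℝ) + a) / ((m:ℝ) + a) with hv
  rcases le_or_gt n (2 * m) with hn2 | hn2
  · have h1 := isP_lower12 hm hp ha (by linarith) n hn.le hn2
    rw [← hv] at h1
    have hn2' : (n:ℝ) ≤ 2 * m := by exact_mod_cast hn2
    rwa [← rho_12 h (by rw [hv, le_div_iff₀ hw]; linarith)
      (by rw [hv, div_le_iff₀ hw]; linarith)] at h1
  have hn2' : 2 * (m:ℝ) + 1 ≤ n := by exact_mod_cast hn2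
  have hv2 : 2 ≤ v := by rw [hv, le_div_iff₀ hw]; linarith
  set w := (m:ℝ) + a with hwdef
  set H : ℝ → ℝ := fun s => ρ (v - s / w) with hH
  have hHc : Continuous H := by
    have := h.1
    simp only [hH]
    fun_prop
  have hmono : Monotone H := by
    intro x y hxy
    apply goodD_antitone h
    have : x / w ≤ y / w := by gcongr
    linarith
  -- the recurrence
  have h2 := hp.2 n
  rw [min_eq_left hn.le] at h2
  have h3 : ∑ i ∈ Finset.range m, H ((i:ℝ) + 1) ≤ ∑ i ∈ Finset.range m, p (n - (i + 1)) := by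
    apply Finset.sum_le_sum
    intro i hi
    rw [Finset.mem_range] at hi
    refine (le_of_eq ?_).trans (ih (n - (i + 1)) (by omega) (by omega))
    simp only [hH]
    congr 1
    rw [Nat.cast_sub (by omega), hv]
    push_cast
    ring
  -- trapezoid
  have htrap : ∫ s in (0:ℝ)..(m:ℝ), H s ≤
      ∑ i ∈ Finset.range m, (H (i:ℝ) + H ((i:ℝ) + 1)) / 2 := by
    have e := intervalIntegral.sum_integral_adjacent_intervals (f := H)
      (μ := MeasureTheory.volume) (a := fun i : ℕ => (i:ℝ)) (n := m)
      (fun k _ => hHc.intervalIntegrable _ _)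
    simp only [Nat.cast_zero] at e
    rw [← e]
    apply Finset.sum_le_sum
    intro i hi
    rw [Finset.mem_range] at hi
    push_cast
    apply trap_cell hHc
    intro s hs
    have hi' : (i:ℝ) + 1 ≤ m := by exact_mod_cast hi
    have hmw : ∀ y : ℝ, y ≤ m → v - y / w ∈ Set.Ici (1:ℝ) := by
      intro y hy
      have : y / w ≤ 1 := by rw [div_le_one hw]; linarith
      simp only [Set.mem_Ici]; linarith
    have := (rho_convex h).2 (hmw i (by linarith)) (hmw (i + 1) hi')
      (show 0 ≤ (i:ℝ) + 1 - s by linarith [hs.2]) (show 0 ≤ s - i by linarith [hs.1]) (by ring)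
    simp only [smul_eq_mul] at this
    refine le_trans (le_of_eq ?_) this
    simp only [hH]
    congr 1
    ring
  have hsum : ∑ i ∈ Finset.range m, (H (i:ℝ) + H ((i:ℝ) + 1)) / 2 =
      ∑ i ∈ Finset.range m, H ((i:ℝ) + 1) - (H m - H 0) / 2 := by
    have := Finset.sum_range_sub (fun i : ℕ => H (i:ℝ)) m
    simp only [Nat.cast_zero, Nat.cast_add, Nat.cast_one] at this
    rw [← this, Finset.sum_div, ← Finset.sum_sub_distrib]
    apply Finset.sum_congr rfl
    intro i _
    ring
  have hlast : ∫ s in (m:ℝ)..w, H s ≤ a * H w := by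
    have : ∫ s in (m:ℝ)..w, H s ≤ ∫ s in (m:ℝ)..w, H w := by
      apply intervalIntegral.integral_mono_on (by linarith) (hHc.intervalIntegrable _ _) (by simp)
      intro s hs
      exact hmono hs.2
    refine this.trans (le_of_eq ?_)
    rw [intervalIntegral.integral_const, smul_eq_mul, hwdef]
    ring
  have htot : ∫ s in (0:ℝ)..w, H s = (n + a) * ρ v := by
    simp only [hH]
    rw [integral_scaled h (by linarith) hw]
    congr 1
    rw [hv]; field_simp
  rw [← intervalIntegral.integral_add_adjacent_intervals (hHc.intervalIntegrable 0 (m:ℝ))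
    (hHc.intervalIntegrable (m:ℝ) w)] at htot
  have hH0 : H 0 = ρ v := by simp [hH]
  have hHm0 : 0 < H m := h.2.1 _
  have hH00 : 0 < H 0 := h.2.1 _
  -- bounds on H
  have hmw1 : (m:ℝ) / w ≤ 1 := by rw [div_le_one hw]; linarith
  have hmw2 : 1 / 2 ≤ (m:ℝ) / w := by rw [le_div_iff₀ hw]; linarith
  have b1 : H w ≤ 3 * H m := by
    have := rho_le_exp h (show v - 1 ≤ v - m / w by linarith) (by linarith)
    have e1 : H w = ρ (v - 1) := by simp only [hH]; rw [div_self hw.ne']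
    rw [e1]
    refine this.trans ?_
    rw [mul_comm]
    apply mul_le_mul_of_nonneg_right _ hHm0.le
    have hy : v - m / w ≤ (N:ℝ) / m := by
      have : v ≤ (n:ℝ) / m := by
        rw [hv, div_le_div_iff₀ hw hm0]; nlinarith
      have h5 : (n:ℝ) / m ≤ (N:ℝ) / m := by gcongr
      linarith
    have hr : rr ρ (v - m / w) ≤ B * m :=
      (rr_mono h (Set.mem_Ici.2 (by linarith)) (Set.mem_Ici.2 (by linarith)) hy).trans hN
    have hexp : (v - m / w - (v - 1)) * rr ρ (v - m / w) ≤ 1 := by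
      have e2 : v - m / w - (v - 1) = a / w := by rw [hwdef]; field_simp; ring
      rw [e2]
      calc a / w * rr ρ (v - m / w) ≤ a / w * (B * m) := by gcongr
        _ = (a * B) * (m / w) := by ring
        _ ≤ 1 * 1 := by
          apply mul_le_mul haB hmw1 (by positivity) (by norm_num)
        _ = 1 := by norm_num
    have := Real.exp_le_exp.2 hexp
    have := Real.exp_one_lt_d9
    linarith
  have b2 : 3 / 2 * H 0 ≤ H m := by
    have := rho_ge_exp h (show (1:ℝ) ≤ 1 from le_rfl) (show 1 ≤ v - m / w by linarith)
      (show v - m / w ≤ v by linarith [show 0 < (m:ℝ) / w by positivity])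
    refine le_trans ?_ this
    rw [hH0, mul_comm]
    apply mul_le_mul_of_nonneg_left _ (h.2.1 v).le
    have h6 := rr_one_le h (show (1:ℝ) ≤ 1 from le_rfl)
    have : (1:ℝ) / 2 ≤ (v - (v - m / w)) * rr ρ 1 := by nlinarith
    have := Real.add_one_le_exp ((v - (v - m / w)) * rr ρ 1)
    linarith
  have b3 : a * (H w - H 0) ≤ (H m - H 0) / 2 := by
    have : a * (H w - H 0) ≤ a * (3 * H m - H 0) := by gcongr
    have : a * (3 * H m - H 0) ≤ 1 / 20 * (3 * H m - H 0) := by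
      apply mul_le_mul_of_nonneg_right ha2
      linarith
    linarith
  rw [← hH0] at htot
  have : (n:ℝ) * H 0 ≤ n * p n := by
    rw [h2]
    linarith
  rw [← hH0]
  exact le_of_mul_le_mul_left this hn0

lemma isP_lower_log {m : ℕ} {p : ℕ → ℝ} (hm : 1 ≤ m) (hp : IsP m p) {N : ℕ} (hN : 1 ≤ N) :
    ∀ n, n ≤ N → -((n:ℝ) / m * Real.log N) ≤ Real.log (p n) := by
  intro n
  have hm0 : (0:ℝ) < m := by exact_mod_cast hm
  have hN1 : (1:ℝ) ≤ N := by exact_mod_cast hN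
  have hlN := Real.log_nonneg hN1
  induction n using Nat.strong_induction_on with
  | _ n ih =>
    intro hnN
    rcases lt_or_ge n m with hn | hn
    · rw [isP_one hp n hn.le, Real.log_one, neg_nonpos]
      positivity
    have hn0 : (0:ℝ) < n := lt_of_lt_of_le hm0 (by exact_mod_cast hn)
    have h1 := ih (n - m) (by omega) (by omega)
    have h2 := hp.2 n
    rw [min_eq_left hn] at h2
    have h3 : p (n - m) ≤ n * p n := by
      rw [h2]
      have := Finset.single_le_sum (f := fun i => p (n - (i + 1))) (s := Finset.range m)
        (fun i _ => (isP_pos hm hp _).le) (show m - 1 ∈ Finset.range m by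
          rw [Finset.mem_range]; omega)
      simpa [Nat.sub_add_cancel hm] using this
    have h4 := Real.log_le_log (isP_pos hm hp _) h3
    rw [Real.log_mul hn0.ne' (isP_pos hm hp n).ne'] at h4
    have h5 : Real.log n ≤ Real.log N := Real.log_le_log hn0 (by exact_mod_cast hnN)
    rw [Nat.cast_sub hn, sub_div, div_self hm0.ne'] at h1
    linarith

lemma isP_rankin {m : ℕ} {p : ℕ → ℝ} (hm : 1 ≤ m) (hp : IsP m p) (N : ℕ) {x : ℝ} (hx : 0 < x) :
    p N * x ^ N ≤ Real.exp (∑ i ∈ Finset.range m, x ^ (i + 1) / ((i:ℝ) + 1)) := by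
  set S : ℝ → ℝ := fun y => ∑ n ∈ Finset.range (N + 1), p n * y ^ n with hS
  set Q : ℝ → ℝ := fun y => ∑ i ∈ Finset.range m, y ^ (i + 1) / ((i:ℝ) + 1) with hQ
  have hpp := isP_pos hm hp
  have dS : ∀ y, HasDerivAt S (∑ n ∈ Finset.range (N + 1), p n * (n * y ^ (n - 1))) y := by
    intro y
    apply HasDerivAt.fun_sum
    intro n _
    exact (hasDerivAt_pow n y).const_mul (p n)
  have dQ : ∀ y, HasDerivAt Q (∑ i ∈ Finset.range m, y ^ i) y := by
    intro y
    apply HasDerivAt.fun_sum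
    intro i _
    have := (hasDerivAt_pow (i + 1) y).div_const ((i:ℝ) + 1)
    refine this.congr_deriv ?_
    push_cast
    field_simp
  have key : ∀ y, 0 < y → ∑ n ∈ Finset.range (N + 1), p n * (n * y ^ (n - 1)) ≤
      (∑ i ∈ Finset.range m, y ^ i) * S y := by
    intro y hy
    have e1 : ∑ n ∈ Finset.range (N + 1), p n * (n * y ^ (n - 1)) =
        ∑ n ∈ Finset.range (N + 1), ∑ i ∈ Finset.range m,
          if i + 1 ≤ n then y ^ i * (p (n - (i + 1)) * y ^ (n - (i + 1))) else 0 := by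
      apply Finset.sum_congr rfl
      intro n _
      have : p n * (n * y ^ (n - 1)) = (n * p n) * y ^ (n - 1) := by ring
      rw [this, hp.2 n, Finset.sum_mul, ← Finset.sum_filter]
      have hf : Finset.range (min m n) = Finset.filter (fun i => i + 1 ≤ n) (Finset.range m) := by
        ext i
        simp only [Finset.mem_range, Finset.mem_filter]
        omega
      rw [hf]
      apply Finset.sum_congr rfl
      intro i hi
      rw [Finset.mem_filter] at hi
      have : n - 1 = i + (n - (i + 1)) := by omega
      rw [this, pow_add]
      ring
    rw [e1, Finset.sum_comm, Finset.sum_mul]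
    apply Finset.sum_le_sum
    intro i _
    rw [← Finset.sum_filter, ← Finset.mul_sum]
    apply mul_le_mul_of_nonneg_left _ (by positivity)
    have hinj : Set.InjOn (fun n => n - (i + 1))
        (Finset.filter (fun n => i + 1 ≤ n) (Finset.range (N + 1)) : Set ℕ) := by
      intro a ha b hb hab
      simp only [Finset.coe_filter, Set.mem_ofPred_eq] at ha hb
      simp only at hab
      omega
    have := Finset.sum_image (f := fun k => p k * y ^ k) hinj
    rw [← this]
    apply Finset.sum_le_sum_of_subset_of_nonneg
    · intro k hk
      simp only [Finset.mem_image, Finset.mem_filter, Finset.mem_range] at hk ⊢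
      omega
    · intro k _ _
      have := hpp k
      positivity
  have hanti : AntitoneOn (fun y => S y * Real.exp (-Q y)) (Set.Ici 0) := by
    have hd : ∀ y, HasDerivAt (fun y => S y * Real.exp (-Q y))
        ((∑ n ∈ Finset.range (N + 1), p n * (n * y ^ (n - 1))) * Real.exp (-Q y) +
          S y * (Real.exp (-Q y) * -(∑ i ∈ Finset.range m, y ^ i))) y := fun y =>
      (dS y).mul ((dQ y).neg.exp)
    apply antitoneOn_of_deriv_nonpos (convex_Ici 0)
    · exact fun y _ => (hd y).continuousAt.continuousWithinAt
    · exact fun y _ => (hd y).differentiableAt.differentiableWithinAt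
    · intro y hy
      rw [interior_Ici] at hy
      rw [(hd y).deriv]
      have := mul_le_mul_of_nonneg_right (key y hy) (Real.exp_pos (-Q y)).le
      linarith
  have h1 := hanti (Set.mem_Ici.2 le_rfl) (Set.mem_Ici.2 hx.le) hx.le
  have hS0 : S 0 = 1 := by
    simp only [hS]
    rw [Finset.sum_range_succ']
    simp [hp.1]
  have hQ0 : Q 0 = 0 := by simp [hQ]
  simp only [hS0, hQ0, neg_zero, Real.exp_zero, mul_one] at h1
  have h2 : p N * x ^ N ≤ S x := by
    apply Finset.single_le_sum (f := fun n => p n * x ^ n) (s := Finset.range (N + 1))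
    · intro k _
      have := hpp k
      positivity
    · simp
  refine h2.trans ?_
  rw [Real.exp_neg, ← div_eq_mul_inv, div_le_one (Real.exp_pos _)] at h1
  exact h1

lemma sum_pow_div_le {x : ℝ} (hx : 8 / 3 ≤ x) (m : ℕ) (hm : 1 ≤ m) :
    ∑ i ∈ Finset.range m, x ^ (i + 1) / ((i:ℝ) + 1) ≤ 4 * x ^ m / m := by
  induction m, hm using Nat.le_induction with
  | base => simp; linarith
  | succ m hm ih =>
    rw [Finset.sum_range_succ]
    have hm1 : (1:ℝ) ≤ m := by exact_mod_cast hm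
    have hx0 : 0 < x := by linarith
    have : 4 * x ^ m / m ≤ 3 * x ^ (m + 1) / ((m:ℝ) + 1) := by
      rw [div_le_div_iff₀ (by linarith) (by linarith), pow_succ]
      have : 4 * ((m:ℝ) + 1) ≤ 3 * x * m := by nlinarith
      have := mul_le_mul_of_nonneg_left this (pow_pos hx0 m).le
      linarith
    push_cast
    have e : 4 * x ^ (m + 1) / ((m:ℝ) + 1) =
      3 * x ^ (m + 1) / ((m:ℝ) + 1) + x ^ (m + 1) / ((m:ℝ) + 1) := by ring
    rw [e]
    linarith

lemma isP_upper_log {m : ℕ} {p : ℕ → ℝ} (hm : 1 ≤ m) (hp : IsP m p) {n : ℕ}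
    (hn : Real.exp m ≤ n) :
    Real.log (p n) ≤ -((n:ℝ) / m * Real.log n) + 4 * ((n:ℝ) / m) := by
  have hm0 : (0:ℝ) < m := by exact_mod_cast hm
  have hn0 : (0:ℝ) < n := lt_of_lt_of_le (Real.exp_pos _) hn
  set x := Real.exp (Real.log n / m) with hx
  have hx1 : 8 / 3 ≤ x := by
    have h1 : (m:ℝ) ≤ Real.log n := (Real.le_log_iff_exp_le hn0).2 hn
    have h2 : 1 ≤ Real.log n / m := by rwa [le_div_iff₀ hm0, one_mul]
    have := Real.exp_le_exp.2 h2
    have := Real.exp_one_gt_d9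
    rw [hx]; linarith
  have hxm : x ^ m = n := by
    rw [hx, ← Real.exp_nat_mul, mul_div_cancel₀ _ hm0.ne', Real.exp_log hn0]
  have hx0 : 0 < x := Real.exp_pos _
  have h1 := isP_rankin hm hp n hx0
  have h2 := sum_pow_div_le hx1 m hm
  rw [hxm] at h2
  have h3 := Real.log_le_log (mul_pos (isP_pos hm hp n) (pow_pos hx0 n)) h1
  rw [Real.log_exp, Real.log_mul (isP_pos hm hp n).ne' (pow_pos hx0 n).ne', Real.log_pow, hx,
    Real.log_exp, ← hx] at h3
  have e : (n:ℝ) * (Real.log n / m) = n / m * Real.log n := by ring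
  have e2 : 4 * (n:ℝ) / m = 4 * (n / m) := by ring
  linarith

lemma permProb_isP (m : ℕ) (hm : 1 ≤ m) : IsP m (fun n => permProb n m) := by
  refine ⟨permProb_zero m hm, fun n => ?_⟩
  have h : ∀ (k : ℕ) (f : ℕ → ℝ), ∑ j ∈ Finset.Icc 1 k, f j = ∑ i ∈ Finset.range k, f (i + 1) := by
    intro k f
    induction k with
    | zero => simp
    | succ k ih => rw [Finset.sum_Icc_succ_top (by omega), ih, Finset.sum_range_succ]
  have := permProb_rec n m hm
  rw [h] at this
  exact this

lemma isDickman_good {ρ : ℝ → ℝ} (h : IsDickman ρ) : GoodD (fun x => ρ (max x 0)) := by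
  obtain ⟨hc, hp, h1, hd⟩ := h
  refine ⟨?_, fun t => hp _ (le_max_right _ _), fun t ht => h1 _ ⟨le_max_right _ _, ?_⟩, ?_⟩
  · exact hc.comp_continuous (by fun_prop) (fun x => Set.mem_Ici.2 (le_max_right _ _))
  · exact max_le ht zero_le_one
  · intro t ht
    have e : max (t - 1) 0 = t - 1 := max_eq_left (by linarith)
    simp only [e]
    refine (hd t ht).congr_of_eventuallyEq ?_
    filter_upwards [lt_mem_nhds ht] with x hx
    rw [max_eq_left (by linarith)]

lemma upper_small {ρ : ℝ → ℝ} (h : GoodD ρ) {m n : ℕ} {p : ℕ → ℝ} (hm : 1 ≤ m) (hmn : m ≤ n)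
    (hp : IsP m p) {u : ℝ} (hu : u = (n:ℝ) / m) (hX : Real.log u ≤ m) :
    Real.log (p n) - Real.log (ρ u) ≤ 15 * u * Real.log (1 + Real.log u / m) := by
  have hm0 : (0:ℝ) < m := by exact_mod_cast hm
  have hnm : (m:ℝ) ≤ n := by exact_mod_cast hmn
  have hu1 : 1 ≤ u := by rw [hu, le_div_iff₀ hm0]; linarith
  have hl := Real.log_nonneg hu1
  set v := ((n:ℝ) + 1) / ((m:ℝ) + 1) with hv
  have hv1 : 1 ≤ v := by rw [hv, le_div_iff₀ (by linarith)]; linarith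
  have huv : u - v = (u - 1) / (m + 1) := by
    rw [hv, hu]; field_simp; ring
  have huv0 : 0 ≤ u - v := by
    rw [huv]; apply div_nonneg <;> linarith
  have h1 := Real.log_le_log (isP_pos hm hp n) (isP_upper h hp n)
  have h2 := (log_diff h hv1 (by linarith : v ≤ u)).2
  have h3 := rr_le_log h hu1
  have h4 : (u - v) * rr ρ u ≤ (u - 1) / m * (3 * (1 + Real.log u)) := by
    apply mul_le_mul _ h3 (rr_pos h hu1).le
    · apply div_nonneg <;> linarith
    · rw [huv]
      apply div_le_div_of_nonneg_left <;> linarith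
  have h5 : u - 1 ≤ u * Real.log u := by
    have := Real.one_sub_inv_le_log_of_pos (show 0 < u by linarith)
    have h6 := mul_le_mul_of_nonneg_left this (show 0 ≤ u by linarith)
    have : u * (1 - u⁻¹) = u - 1 := by field_simp
    linarith
  have h6 : (u - 1) * (3 * (1 + Real.log u)) ≤ 6 * u * Real.log u := by nlinarith
  set X := Real.log u / m with hXd
  have hX0 : 0 ≤ X := by positivity
  have hX1 : X ≤ 1 := by rw [hXd, div_le_one hm0]; exact hX
  have h7 : (u - 1) / m * (3 * (1 + Real.log u)) ≤ 6 * u * X := by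
    rw [hXd, div_mul_eq_mul_div, mul_div_assoc', div_le_div_iff_of_pos_right hm0]
    exact h6
  have h8 : X / 2 ≤ Real.log (1 + X) := by
    have := Real.le_log_one_add_of_nonneg hX0
    refine le_trans ?_ this
    rw [div_le_div_iff₀ (by norm_num) (by linarith)]
    nlinarith
  have h9 : u * (X / 2) ≤ u * Real.log (1 + X) := mul_le_mul_of_nonneg_left h8 (by linarith)
  have h10 : 0 ≤ u * X := by positivity
  nlinarith

lemma upper_large {ρ : ℝ → ℝ} (h : GoodD ρ) {m n : ℕ} {p : ℕ → ℝ} (hm : 1 ≤ m) (hmn : m ≤ n)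
    (hp : IsP m p) {u : ℝ} (hu : u = (n:ℝ) / m) (hX : (m:ℝ) ≤ Real.log u) :
    Real.log (p n) - Real.log (ρ u) ≤ 15 * u * Real.log (1 + Real.log u / m) := by
  have hm0 : (0:ℝ) < m := by exact_mod_cast hm
  have hm1 : (1:ℝ) ≤ m := by exact_mod_cast hm
  have hnm : (m:ℝ) ≤ n := by exact_mod_cast hmn
  have hu1 : 1 ≤ u := by rw [hu, le_div_iff₀ hm0]; linarith
  have hu0 : 0 < u := by linarith
  have hl := Real.log_nonneg hu1
  have hn : (n:ℝ) = u * m := by rw [hu]; field_simp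
  have hexp : Real.exp m ≤ n := by
    have := (Real.le_log_iff_exp_le hu0).1 hX
    nlinarith
  have h1 := isP_upper_log hm hp hexp
  rw [← hu, hn, Real.log_mul hu0.ne' hm0.ne'] at h1
  have h2 := (abs_le.1 (log_rho_bound h hu1)).1
  set X := Real.log u / m with hXd
  have hX1 : 1 ≤ X := by rw [hXd, le_div_iff₀ hm0]; linarith
  have h3 : Real.log (1 + Real.log u) ≤ Real.log (1 + X) + Real.log m := by
    rw [← Real.log_mul (by linarith) hm0.ne']
    apply Real.log_le_log (by linarith)
    have : (1 + X) * m = m + Real.log u := by rw [hXd]; field_simp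
    rw [this]; linarith
  have h4 : 1 / 2 ≤ Real.log (1 + X) := by
    have := Real.log_le_log (show (0:ℝ) < 2 by norm_num) (show 2 ≤ 1 + X by linarith)
    have := Real.log_two_gt_d9
    linarith
  have h5 := mul_le_mul_of_nonneg_left h3 hu0.le
  have h6 := mul_le_mul_of_nonneg_left h4 hu0.le
  linarith

lemma lower_small {ρ : ℝ → ℝ} (h : GoodD ρ) {m n : ℕ} {p : ℕ → ℝ} (hm : 1 ≤ m) (hmn : m ≤ n)
    (hp : IsP m p) {u : ℝ} (hu : u = (n:ℝ) / m) {K a : ℝ} (hK : 0 < K) (ha : 0 < a)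
    (ha2 : a ≤ 1 / 20) (haB : a * (3 * (1 + K)) ≤ 1) (hX : Real.log u ≤ K * m) :
    a / 6 * u * Real.log (1 + Real.log u / m) ≤ Real.log (p n) - Real.log (ρ u) := by
  have hm0 : (0:ℝ) < m := by exact_mod_cast hm
  have hm1 : (1:ℝ) ≤ m := by exact_mod_cast hm
  have hnm : (m:ℝ) ≤ n := by exact_mod_cast hmn
  have hn0 : (0:ℝ) < n := by linarith
  have hu1 : 1 ≤ u := by rw [hu, le_div_iff₀ hm0]; linarith
  have hu0 : 0 < u := by linarith
  have hl := Real.log_nonneg hu1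
  have hr : rr ρ ((n:ℝ) / m) ≤ 3 * (1 + K) * m := by
    rw [← hu]
    have := rr_le_log h hu1
    nlinarith
  set v := ((n:ℝ) + a) / ((m:ℝ) + a) with hv
  have hv1 : 1 ≤ v := by rw [hv, le_div_iff₀ (by linarith)]; linarith
  have huv : u - v = a * (u - 1) / (m + a) := by
    rw [hv, hu]; field_simp; ring
  have huv1 : a * (u - 1) / (2 * m) ≤ u - v := by
    rw [huv]
    apply div_le_div_of_nonneg_left
    · exact mul_nonneg ha.le (by linarith)
    · linarith
    · linarith
  have huv0 : 0 ≤ u - v := by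
    refine le_trans ?_ huv1
    apply div_nonneg (mul_nonneg ha.le (by linarith)) (by linarith)
  have h1 := Real.log_le_log (h.2.1 _) (isP_lower h hm hp ha ha2 haB hr n le_rfl)
  rw [← hv] at h1
  have h2 := (log_diff h hv1 (by linarith : v ≤ u)).1
  have h3 : (1 + Real.log u) / 3 ≤ rr ρ v := by
    have b1 := rr_one_le h hv1
    have b2 := rr_ge_log h hv1
    have b3 : Real.log u ≤ Real.log 2 + Real.log v := by
      rw [← Real.log_mul (by norm_num) (by linarith)]
      apply Real.log_le_log hu0
      rw [hv, hu, mul_div_assoc', div_le_div_iff₀ hm0 (by linarith)]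
      nlinarith
    have := Real.log_two_lt_d9
    linarith
  have h4 : a * (u - 1) / (2 * m) * ((1 + Real.log u) / 3) ≤ (u - v) * rr ρ v :=
    mul_le_mul huv1 h3 (by linarith) huv0
  have h5 : u * Real.log u ≤ (u - 1) * (1 + Real.log u) := by
    have := Real.log_le_sub_one_of_pos hu0
    linarith
  have h6 : a / 6 * u * (Real.log u / m) ≤ a * (u - 1) / (2 * m) * ((1 + Real.log u) / 3) := by
    have e1 : a / 6 * u * (Real.log u / m) = a / (6 * m) * (u * Real.log u) := by
      field_simp
    have e2 : a * (u - 1) / (2 * m) * ((1 + Real.log u) / 3) =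
        a / (6 * m) * ((u - 1) * (1 + Real.log u)) := by field_simp; ring
    rw [e1, e2]
    exact mul_le_mul_of_nonneg_left h5 (by positivity)
  have hX0 : 0 ≤ Real.log u / m := by positivity
  have h7 : Real.log (1 + Real.log u / m) ≤ Real.log u / m := by
    have := Real.log_le_sub_one_of_pos (show 0 < 1 + Real.log u / m by linarith)
    linarith
  have h8 := mul_le_mul_of_nonneg_left h7 (show 0 ≤ a / 6 * u by positivity)
  linarith

lemma lower_large {ρ : ℝ → ℝ} (h : GoodD ρ) {m n : ℕ} {p : ℕ → ℝ} (hm : 1 ≤ m) (hmn : m ≤ n)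
    (hp : IsP m p) {u : ℝ} (hu : u = (n:ℝ) / m) (hX : Real.exp 8 * m ≤ Real.log u) :
    1 / 4 * u * Real.log (1 + Real.log u / m) ≤ Real.log (p n) - Real.log (ρ u) := by
  have hm0 : (0:ℝ) < m := by exact_mod_cast hm
  have hm1 : (1:ℝ) ≤ m := by exact_mod_cast hm
  have hnm : (m:ℝ) ≤ n := by exact_mod_cast hmn
  have hn0 : (0:ℝ) < n := by linarith
  have hu1 : 1 ≤ u := by rw [hu, le_div_iff₀ hm0]; linarith
  have hu0 : 0 < u := by linarith
  have hl := Real.log_nonneg hu1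
  have hn : (n:ℝ) = u * m := by rw [hu]; field_simp
  have h1 := isP_lower_log hm hp (hm.trans hmn) n le_rfl
  rw [← hu, hn, Real.log_mul hu0.ne' hm0.ne'] at h1
  have h2 := (abs_le.1 (log_rho_bound h hu1)).2
  set X := Real.log u / m with hXd
  have hX8 : Real.exp 8 ≤ X := by rw [hXd, le_div_iff₀ hm0]; linarith
  have hX1 : 1 ≤ X := by linarith [Real.add_one_le_exp 8]
  have hlX : 8 ≤ Real.log X := (Real.le_log_iff_exp_le (by linarith)).2 hX8
  have h3 : Real.log X + Real.log m ≤ Real.log (1 + Real.log u) := by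
    rw [← Real.log_mul (by linarith) hm0.ne']
    apply Real.log_le_log (by positivity)
    have : X * m = Real.log u := by rw [hXd]; field_simp
    rw [this]; linarith
  have h4 : Real.log (1 + X) ≤ Real.log X + 1 := by
    have := Real.log_le_log (by linarith) (show 1 + X ≤ X * 2 by linarith)
    rw [Real.log_mul (by linarith) (by norm_num)] at this
    have := Real.log_two_lt_d9
    linarith
  have h5 : 1 / 4 * Real.log (1 + X) ≤ Real.log X - 3 := by linarith
  have h6 := mul_le_mul_of_nonneg_left h5 hu0.le
  have h7 := mul_le_mul_of_nonneg_left h3 hu0.le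
  linarith

/-- There exist absolute constants `c, C > 0` such that for all integers
`n ≥ m ≥ 1`, writing `u = n/m`, one has
`c·u·log(1 + (log u)/m) ≤ log(p_{n,m}/ρ(u)) ≤ C·u·log(1 + (log u)/m)`. -/
theorem stmt6 :
    ∃ c C : ℝ, 0 < c ∧ 0 < C ∧ ∀ n m : ℕ, 1 ≤ m → m ≤ n → ∀ ρ : ℝ → ℝ, IsDickman ρ →
      ∀ u : ℝ, u = (n : ℝ) / (m : ℝ) →
      c * u * Real.log (1 + Real.log u / (m : ℝ)) ≤ Real.log (permProb n m / ρ u) ∧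
        Real.log (permProb n m / ρ u) ≤ C * u * Real.log (1 + Real.log u / (m : ℝ)) := by
  set B : ℝ := 3 * (1 + Real.exp 8) with hB
  have hB0 : 0 < B := by positivity
  set a : ℝ := 1 / (B + 20) with ha
  have ha0 : 0 < a := by positivity
  have ha2 : a ≤ 1 / 20 := one_div_le_one_div_of_le (by norm_num) (by linarith)
  have haB : a * B ≤ 1 := by
    rw [ha, one_div_mul_eq_div, div_le_one (by positivity)]; linarith
  refine ⟨a / 6, 15, by positivity, by norm_num, ?_⟩
  intro n m hm hmn ρ hρ u hu
  have hm0 : (0:ℝ) < m := by exact_mod_cast hm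
  have hnm : (m:ℝ) ≤ n := by exact_mod_cast hmn
  have hu1 : 1 ≤ u := by rw [hu, le_div_iff₀ hm0]; linarith
  have hu0 : 0 < u := by linarith
  have hl := Real.log_nonneg hu1
  have hY : 0 ≤ u * Real.log (1 + Real.log u / m) := by
    apply mul_nonneg hu0.le
    apply Real.log_nonneg
    have : 0 ≤ Real.log u / m := by positivity
    linarith
  have h := isDickman_good hρ
  have hp := permProb_isP m hm
  have hpos := isP_pos hm hp n
  have e : ρ u = (fun x => ρ (max x 0)) u := by
    simp only
    rw [max_eq_left hu0.le]
  rw [e, Real.log_div hpos.ne' (h.2.1 u).ne']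
  constructor
  · rcases le_total (Real.log u) (Real.exp 8 * m) with hX | hX
    · exact lower_small h hm hmn hp hu (Real.exp_pos 8) ha0 ha2 haB hX
    · refine le_trans ?_ (lower_large h hm hmn hp hu hX)
      rw [mul_assoc, mul_assoc]
      apply mul_le_mul_of_nonneg_right _ hY
      linarith
  · rcases le_total (Real.log u) m with hX | hX
    · exact upper_small h hm hmn hp hu hX
    · exact upper_large h hm hmn hp hu hX
end
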